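/- arXiv:1605.00035 — 2 statements merged into one kernel-verified Lean document; each statement's English description precedes it below -/
import Mathlib

section
/- Suppose E¹ and E² both maximize Lebesgue measure among minimizers of the perimeter functional P(E, Ω₀) subject to the constraint E \ Ω̄ = L \ Ω̄ (for a fixed set L of finite perimeter and fixed open sets Ω ⊆ Ω₀). Then |E¹ △ E²| = 0, i.e., the maximizer is unique up to a null set. -/
open MeasureTheory Set Filter Metric Bornology
open scoped ENNReal symmDiff RealInnerProductSpace Topology

noncomputable section

/-- Divergence of a vector field on `ℝⁿ`. -/
def divg {n : ℕ} (φ : EuclideanSpace ℝ (Fin n) → EuclideanSpace ℝ (Fin n))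
    (x : EuclideanSpace ℝ (Fin n)) : ℝ :=
  ∑ i, fderiv ℝ φ x (EuclideanSpace.single i 1) i

/-- Admissible test vector fields for the definition of total variation in `Ω`. -/
def Admissible {n : ℕ} (Ω : Set (EuclideanSpace ℝ (Fin n)))
    (φ : EuclideanSpace ℝ (Fin n) → EuclideanSpace ℝ (Fin n)) : Prop :=
  ContDiff ℝ 1 φ ∧ HasCompactSupport φ ∧ tsupport φ ⊆ Ω ∧ ∀ x, ‖φ x‖ ≤ 1

/-- Total variation of the distributional gradient of `u` in `Ω`. -/
def var {n : ℕ} (Ω : Set (EuclideanSpace ℝ (Fin n))) (u : EuclideanSpace ℝ (Fin n) → ℝ) : ℝ≥0∞ :=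
  ⨆ φ ∈ {φ | Admissible Ω φ}, ENNReal.ofReal (∫ x in Ω, u x * divg φ x)

/-- Perimeter of `E` in `Ω` : total variation of the characteristic function of `E`. -/
def perim {n : ℕ} (E Ω : Set (EuclideanSpace ℝ (Fin n))) : ℝ≥0∞ :=
  var Ω (E.indicator 1)


abbrev E2 := EuclideanSpace ℝ (Fin 2)

/-!
Perimeter is submodular. For smooth `u`, `v`, regularize `max u v` and `min u v` by replacing
`|s - t|` with `√((s - t) ^ 2 + δ ^ 2)`. The gradients become `w ∇u + (1 - w) ∇v` and
`(1 - w) ∇u + w ∇v` with `0 ≤ w ≤ 1`, so after integrating by parts a pair of test fields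
`(φ, ψ)` for the maximum and the minimum turns into the pair `w φ + (1 - w) ψ`, `w ψ + (1 - w) φ`
for `u` and `v`, which is again admissible. Mollification and `δ → 0` give the inequality for
bounded functions, in particular for indicators.

The intersection of two minimizers is a competitor, so its perimeter is at least the minimum, and
submodularity makes the union a minimizer. If both have maximal measure, the union cannot have
larger measure, so each of them coincides with the union up to a null set.
-/

/-- The set of points of `s` at which `f` attains its minimum over `s`. -/
def minimizersOn {α β : Type*} [Preorder β] (f : α → β) (s : Set α) : Set α :=
  {a ∈ s | IsMinOn f s a}

lemma supClosed_minimizersOn {α : Type*} [Lattice α] {P : α → ℝ≥0∞} {C : Set α}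
    (hC : IsSublattice C) (hP : ∀ a ∈ C, ∀ b ∈ C, P (a ⊔ b) + P (a ⊓ b) ≤ P a + P b) :
    SupClosed (minimizersOn P C) := by
  rintro a ⟨haC, ha⟩ b ⟨hbC, hb⟩
  refine ⟨hC.supClosed haC hbC, fun c hc => ?_⟩
  by_cases hPa : P a = ⊤
  · exact le_top.trans (hPa.symm.le.trans (ha hc))
  have hsup_add : P (a ⊔ b) + P a ≤ P c + P a :=
    calc P (a ⊔ b) + P a ≤ P (a ⊔ b) + P (a ⊓ b) := by gcongr; exact ha (hC.infClosed haC hbC)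
      _ ≤ P a + P b := hP a haC b hbC
      _ ≤ P a + P c := by gcongr; exact hb hc
      _ = P c + P a := add_comm _ _
  exact (ENNReal.add_le_add_iff_right hPa).1 hsup_add

lemma ae_eq_of_isMaxOn_measure {X : Type*} [MeasurableSpace X] {μ : Measure X}
    {C : Set (Set X)} (hC : SupClosed C) {E₁ E₂ : Set X} (h₁ : E₁ ∈ C) (h₂ : E₂ ∈ C)
    (hE₁ : NullMeasurableSet E₁ μ) (hE₂ : NullMeasurableSet E₂ μ) (hfin : μ E₁ ≠ ⊤)
    (hmax₁ : IsMaxOn μ C E₁) (hmax₂ : IsMaxOn μ C E₂) : E₁ =ᵐ[μ] E₂ := by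
  have hUC : E₁ ∪ E₂ ∈ C := hC h₁ h₂
  have hUfin : μ (E₁ ∪ E₂) ≠ ⊤ := ((hmax₁ hUC).trans_lt hfin.lt_top).ne
  have hU₁ := ae_eq_of_subset_of_measure_ge subset_union_left (hmax₁ hUC) hE₁ hUfin
  have hU₂ := ae_eq_of_subset_of_measure_ge subset_union_right (hmax₂ hUC) hE₂ hUfin
  exact hU₁.trans hU₂.symm

lemma isSublattice_setOf_measurableSet_subset_sdiff_eq {X : Type*} [MeasurableSpace X]
    (S K L : Set X) : IsSublattice {E | MeasurableSet E ∧ E ⊆ S ∧ E \ K = L \ K} where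
  supClosed := by
    rintro A ⟨hA, hAS, hAK⟩ B ⟨hB, hBS, hBK⟩
    exact ⟨hA.union hB, union_subset hAS hBS, sup_sdiff.trans (by rw [hAK, hBK, sup_idem])⟩
  infClosed := by
    rintro A ⟨hA, hAS, hAK⟩ B ⟨hB, -, hBK⟩
    exact ⟨hA.inter hB, inter_subset_left.trans hAS, inf_sdiff.trans (by rw [hAK, hBK, inf_idem])⟩

section SmoothMax

/-- A smooth regularization, for `δ ≠ 0`, of the maximum of two reals: the modulus in
`max s t = (s + t + |s - t|) / 2` is replaced by `√((s - t) ^ 2 + δ ^ 2)`. -/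
def smoothMax (δ s t : ℝ) : ℝ := (s + t + √((s - t) ^ 2 + δ ^ 2)) / 2

/-- The regularization of the minimum of two reals that is complementary to `smoothMax`. -/
def smoothMin (δ s t : ℝ) : ℝ := s + t - smoothMax δ s t

/-- The partial derivative of `smoothMax δ s t` in `s`; the one in `t` is
`1 - smoothMaxWeight δ s t`. -/
def smoothMaxWeight (δ s t : ℝ) : ℝ := (1 + (s - t) / √((s - t) ^ 2 + δ ^ 2)) / 2

lemma smoothMax_zero (s t : ℝ) : smoothMax 0 s t = max s t := by
  rw [sup_eq_half_smul_add_add_abs_sub' ℝ, abs_sub_comm, smul_eq_mul, smoothMax,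
    zero_pow two_ne_zero, add_zero, Real.sqrt_sq_eq_abs, div_eq_inv_mul]

lemma tendsto_smoothMax {ι : Type*} {l : Filter ι} {δ a b : ι → ℝ} {s t : ℝ}
    (hδ : Tendsto δ l (𝓝 0)) (ha : Tendsto a l (𝓝 s)) (hb : Tendsto b l (𝓝 t)) :
    Tendsto (fun i => smoothMax (δ i) (a i) (b i)) l (𝓝 (max s t)) := by
  rw [← smoothMax_zero]
  exact ((ha.add hb).add (((ha.sub hb).pow 2).add (hδ.pow 2)).sqrt).div_const 2

lemma tendsto_smoothMin {ι : Type*} {l : Filter ι} {δ a b : ι → ℝ} {s t : ℝ}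
    (hδ : Tendsto δ l (𝓝 0)) (ha : Tendsto a l (𝓝 s)) (hb : Tendsto b l (𝓝 t)) :
    Tendsto (fun i => smoothMin (δ i) (a i) (b i)) l (𝓝 (min s t)) := by
  rw [← add_sub_cancel_right (min s t) (max s t), min_add_max]
  exact (ha.add hb).sub (tendsto_smoothMax hδ ha hb)

lemma sqrt_sub_sq_add_sq_le (δ s t : ℝ) : √((s - t) ^ 2 + δ ^ 2) ≤ |s| + |t| + |δ| := by
  refine (Real.sqrt_le_sqrt (?_ : _ ≤ (|s - t| + |δ|) ^ 2)).trans ?_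
  · rw [← sq_abs (s - t), ← sq_abs δ]
    nlinarith [abs_nonneg (s - t), abs_nonneg δ]
  · rw [Real.sqrt_sq (by positivity)]
    gcongr
    exact abs_sub s t

lemma abs_smoothMax_le (δ s t : ℝ) : |smoothMax δ s t| ≤ |s| + |t| + |δ| := by
  have hsqrt := sqrt_sub_sq_add_sq_le δ s t
  have hsqrt_nonneg := Real.sqrt_nonneg ((s - t) ^ 2 + δ ^ 2)
  unfold smoothMax
  rw [abs_le]
  constructor <;> linarith [neg_abs_le s, neg_abs_le t, le_abs_self s, le_abs_self t, abs_nonneg δ]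

lemma abs_smoothMin_le (δ s t : ℝ) : |smoothMin δ s t| ≤ 2 * (|s| + |t|) + |δ| := by
  have hsub : |smoothMin δ s t| ≤ |s + t| + |smoothMax δ s t| := abs_sub _ _
  linarith [abs_add_le s t, abs_smoothMax_le δ s t]

lemma smoothMaxWeight_mem_Icc (δ s t : ℝ) : smoothMaxWeight δ s t ∈ Icc (0 : ℝ) 1 := by
  have habs : |s - t| ≤ √((s - t) ^ 2 + δ ^ 2) := Real.abs_le_sqrt (by nlinarith)
  have hratio : |(s - t) / √((s - t) ^ 2 + δ ^ 2)| ≤ 1 := by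
    rw [abs_div, abs_of_nonneg (Real.sqrt_nonneg _)]
    exact div_le_one_of_le₀ habs (Real.sqrt_nonneg _)
  obtain ⟨hlower, hupper⟩ := abs_le.1 hratio
  unfold smoothMaxWeight
  constructor <;> linarith

variable {V : Type*} [NormedAddCommGroup V] [NormedSpace ℝ V] {δ : ℝ} {u v : V → ℝ}

lemma contDiff_sqrt_sub_sq_add_sq {k : WithTop ℕ∞} (hδ : δ ≠ 0) (hu : ContDiff ℝ k u)
    (hv : ContDiff ℝ k v) : ContDiff ℝ k fun x => √((u x - v x) ^ 2 + δ ^ 2) :=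
  (((hu.sub hv).pow 2).add contDiff_const).sqrt fun x => by positivity

lemma contDiff_smoothMax {k : WithTop ℕ∞} (hδ : δ ≠ 0) (hu : ContDiff ℝ k u)
    (hv : ContDiff ℝ k v) : ContDiff ℝ k fun x => smoothMax δ (u x) (v x) :=
  ((hu.add hv).add (contDiff_sqrt_sub_sq_add_sq hδ hu hv)).div_const 2

lemma contDiff_smoothMin {k : WithTop ℕ∞} (hδ : δ ≠ 0) (hu : ContDiff ℝ k u)
    (hv : ContDiff ℝ k v) : ContDiff ℝ k fun x => smoothMin δ (u x) (v x) :=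
  (hu.add hv).sub (contDiff_smoothMax hδ hu hv)

lemma contDiff_smoothMaxWeight {k : WithTop ℕ∞} (hδ : δ ≠ 0) (hu : ContDiff ℝ k u)
    (hv : ContDiff ℝ k v) : ContDiff ℝ k fun x => smoothMaxWeight δ (u x) (v x) :=
  (contDiff_const.add ((hu.sub hv).div (contDiff_sqrt_sub_sq_add_sq hδ hu hv)
    fun x => by positivity)).div_const 2

lemma hasFDerivAt_smoothMax {x : V} {u' v' : V →L[ℝ] ℝ} (hδ : δ ≠ 0) (hu : HasFDerivAt u u' x)
    (hv : HasFDerivAt v v' x) :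
    HasFDerivAt (fun y => smoothMax δ (u y) (v y))
      (smoothMaxWeight δ (u x) (v x) • u' + (1 - smoothMaxWeight δ (u x) (v x)) • v') x := by
  have hpos : 0 < (u x - v x) ^ 2 + δ ^ 2 := by positivity
  have hsqrt := (((hu.sub hv).pow 2).add_const (δ ^ 2)).sqrt hpos.ne'
  refine (((hu.add hv).add hsqrt).mul_const (2⁻¹ : ℝ)).congr_fderiv ?_
  ext z
  simp only [Pi.sub_apply, one_div, mul_inv_rev, Nat.add_one_sub_one, pow_one, nsmul_eq_mul,
    Nat.cast_ofNat, smul_add, add_apply, smul_apply, smul_eq_mul, sub_apply, smoothMaxWeight]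
  field_simp
  ring

lemma hasFDerivAt_smoothMin {x : V} {u' v' : V →L[ℝ] ℝ} (hδ : δ ≠ 0) (hu : HasFDerivAt u u' x)
    (hv : HasFDerivAt v v' x) :
    HasFDerivAt (fun y => smoothMin δ (u y) (v y))
      ((1 - smoothMaxWeight δ (u x) (v x)) • u' + smoothMaxWeight δ (u x) (v x) • v') x :=
  ((hu.add hv).sub (hasFDerivAt_smoothMax hδ hu hv)).congr_fderiv (by module)

end SmoothMax

open scoped Convolution

section Measure

variable {G : Type*} [MeasurableSpace G] {μ : Measure G}

lemma ae_norm_le_eLpNorm_top_toReal {f : G → ℝ}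
    (hf : MemLp f ∞ μ) : ∀ᵐ x ∂μ, ‖f x‖ ≤ (eLpNorm f ∞ μ).toReal := by
  filter_upwards [ae_le_eLpNormEssSup (f := f) (μ := μ)] with x hx
  rw [← toReal_enorm]
  exact ENNReal.toReal_mono hf.2.ne (eLpNorm_exponent_top (f := f) ▸ hx)

lemma tendsto_integral_mul_of_bounded {f : ℕ → G → ℝ} {f₀ D : G → ℝ} {C : ℝ}
    (hD : Integrable D μ) (hf : ∀ k, AEStronglyMeasurable (f k) μ) (hbound : ∀ k x, ‖f k x‖ ≤ C)
    (hlim : ∀ᵐ x ∂μ, Tendsto (f · x) atTop (𝓝 (f₀ x))) :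
    Tendsto (fun k => ∫ x, f k x * D x ∂μ) atTop (𝓝 (∫ x, f₀ x * D x ∂μ)) := by
  refine tendsto_integral_of_dominated_convergence (fun x => C * ‖D x‖)
    (fun k => (hf k).mul hD.aestronglyMeasurable) (hD.norm.const_mul C)
    (fun k => ae_of_all _ fun x => ?_) (hlim.mono fun x hx => hx.mul_const _)
  rw [norm_mul]
  exact mul_le_mul_of_nonneg_right (hbound k x) (norm_nonneg _)

variable [AddCommGroup G] [MeasurableAdd₂ G] [μ.IsAddLeftInvariant] {g u D : G → ℝ}

lemma integral_mul_sub_mul_eq_mul_integral (t : G) :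
    ∫ x, u (x - t) * (D x * g t) ∂μ = g t * ∫ x, u x * D (x + t) ∂μ := by
  rw [← integral_add_right_eq_self _ t, ← integral_const_mul]
  congr 1 with x
  rw [add_sub_cancel_right]
  ring

variable [MeasurableNeg G] [SFinite μ]

lemma norm_convolution_le_of_ae_norm_le {C : ℝ} (hg : Integrable g μ) (hg_nonneg : ∀ t, 0 ≤ g t)
    (hu : ∀ᵐ x ∂μ, ‖u x‖ ≤ C) (x : G) :
    ‖(g ⋆[ContinuousLinearMap.lsmul ℝ ℝ, μ] u) x‖ ≤ (∫ t, g t ∂μ) * C := by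
  rw [convolution_def, ← integral_mul_const]
  refine norm_integral_le_of_norm_le (hg.mul_const C) ?_
  filter_upwards [(quasiMeasurePreserving_sub_left μ x).ae hu] with t ht
  rw [ContinuousLinearMap.lsmul_apply, norm_smul, Real.norm_of_nonneg (hg_nonneg t)]
  exact mul_le_mul_of_nonneg_left ht (hg_nonneg t)

lemma integrable_mul_sub_mul_of_memLp_top (hg : Integrable g μ) (hu : MemLp u ∞ μ)
    (hD : Integrable D μ) :
    Integrable (Function.uncurry fun x t => u (x - t) * (D x * g t)) (μ.prod μ) :=
  (hD.mul_prod hg).bdd_mul (c := (eLpNorm u ∞ μ).toReal)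
    (hu.1.comp_quasiMeasurePreserving (quasiMeasurePreserving_sub μ μ))
    ((quasiMeasurePreserving_sub μ μ).ae (ae_norm_le_eLpNorm_top_toReal hu))

lemma integral_convolution_mul (hg : Integrable g μ) (hu : MemLp u ∞ μ) (hD : Integrable D μ) :
    ∫ x, (g ⋆[ContinuousLinearMap.lsmul ℝ ℝ, μ] u) x * D x ∂μ =
      ∫ t, g t * ∫ x, u x * D (x + t) ∂μ ∂μ := by
  calc ∫ x, (g ⋆[ContinuousLinearMap.lsmul ℝ ℝ, μ] u) x * D x ∂μ
      = ∫ x, ∫ t, u (x - t) * (D x * g t) ∂μ ∂μ := by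
        congr 1 with x
        rw [convolution_def, ← integral_mul_const]
        congr 1 with t
        rw [ContinuousLinearMap.lsmul_apply, smul_eq_mul]
        ring
    _ = ∫ t, ∫ x, u (x - t) * (D x * g t) ∂μ ∂μ :=
        integral_integral_swap (integrable_mul_sub_mul_of_memLp_top hg hu hD)
    _ = ∫ t, g t * ∫ x, u x * D (x + t) ∂μ ∂μ := by
        simp_rw [integral_mul_sub_mul_eq_mul_integral]

lemma integral_convolution_mul_le {M : ℝ} (hg : Integrable g μ) (hg_nonneg : ∀ t, 0 ≤ g t)
    (hg_integral : ∫ t, g t ∂μ = 1) (hu : MemLp u ∞ μ) (hD : Integrable D μ)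
    (hM : ∀ t ∈ Function.support g, ∫ x, u x * D (x + t) ∂μ ≤ M) :
    ∫ x, (g ⋆[ContinuousLinearMap.lsmul ℝ ℝ, μ] u) x * D x ∂μ ≤ M := by
  have hint : Integrable (fun t => g t * ∫ x, u x * D (x + t) ∂μ) μ := by
    simpa only [Function.uncurry_apply_pair, integral_mul_sub_mul_eq_mul_integral] using
      (integrable_mul_sub_mul_of_memLp_top hg hu hD).integral_prod_right
  calc ∫ x, (g ⋆[ContinuousLinearMap.lsmul ℝ ℝ, μ] u) x * D x ∂μ
      = ∫ t, g t * ∫ x, u x * D (x + t) ∂μ ∂μ := integral_convolution_mul hg hu hD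
    _ ≤ ∫ t, g t * M ∂μ := by
        refine integral_mono hint (hg.mul_const M) fun t => ?_
        by_cases ht : g t = 0
        · simp only [ht, zero_mul, le_refl]
        · exact mul_le_mul_of_nonneg_left (hM t ht) (hg_nonneg t)
    _ = M := by rw [integral_mul_const, hg_integral, one_mul]

end Measure

section Mollify

lemma exists_seq_contDiffBump (V : Type*) [NormedAddCommGroup V] : ∃ ρ : ℕ → ContDiffBump (0 : V),
    Tendsto (fun k => (ρ k).rOut) atTop (𝓝 0) ∧ ∀ k, (ρ k).rOut ≤ 2 * (ρ k).rIn := by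
  have hpos (k : ℕ) : (0 : ℝ) < 1 / (k + 1) := Nat.one_div_pos_of_nat
  refine ⟨fun k => ⟨1 / (k + 1), 2 * (1 / (k + 1)), hpos k, by linarith [hpos k]⟩, ?_,
    fun _ => le_rfl⟩
  simpa only [mul_zero] using tendsto_one_div_add_atTop_nhds_zero_nat.const_mul (2 : ℝ)

variable {V : Type*} [NormedAddCommGroup V] [NormedSpace ℝ V] [FiniteDimensional ℝ V]
  [MeasurableSpace V] [BorelSpace V] {μ : Measure V} [μ.IsAddHaarMeasure]

/-- The mollification `ρ * u` of a function `u` by the bump function `ρ`, normalized to have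
integral `1`. -/
def mollify (μ : Measure V) (ρ : ContDiffBump (0 : V)) (u : V → ℝ) : V → ℝ :=
  ρ.normed μ ⋆[ContinuousLinearMap.lsmul ℝ ℝ, μ] u

variable {u : V → ℝ}

lemma contDiff_mollify (ρ : ContDiffBump (0 : V)) (hu : LocallyIntegrable u μ) {k : ℕ∞} :
    ContDiff ℝ k (mollify μ ρ u) :=
  ρ.hasCompactSupport_normed.contDiff_convolution_left _ ρ.contDiff_normed hu

lemma norm_mollify_le (ρ : ContDiffBump (0 : V)) {C : ℝ} (hu : ∀ᵐ x ∂μ, ‖u x‖ ≤ C) (x : V) :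
    ‖mollify μ ρ u x‖ ≤ C := by
  have hle := norm_convolution_le_of_ae_norm_le (ρ.integrable_normed (μ := μ)) ρ.nonneg_normed hu x
  rwa [ρ.integral_normed, one_mul] at hle

lemma ae_tendsto_mollify {ρ : ℕ → ContDiffBump (0 : V)}
    (hρ : Tendsto (fun k => (ρ k).rOut) atTop (𝓝 0)) (hρ' : ∀ k, (ρ k).rOut ≤ 2 * (ρ k).rIn)
    (hu : LocallyIntegrable u μ) :
    ∀ᵐ x ∂μ, Tendsto (fun k => mollify μ (ρ k) u x) atTop (𝓝 (u x)) :=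
  ContDiffBump.ae_convolution_tendsto_right_of_locallyIntegrable hρ (.of_forall hρ') hu

variable {v D : V → ℝ} {ρ : ℕ → ContDiffBump (0 : V)} {δ : ℕ → ℝ}

lemma tendsto_integral_smoothMax_mollify_mul
    (hρ : Tendsto (fun k => (ρ k).rOut) atTop (𝓝 0)) (hρ' : ∀ k, (ρ k).rOut ≤ 2 * (ρ k).rIn)
    (hδ : Tendsto δ atTop (𝓝 0)) (hδ_ne : ∀ k, δ k ≠ 0) (hδ_le : ∀ k, |δ k| ≤ 1)
    (hu : MemLp u ∞ μ) (hv : MemLp v ∞ μ) (hD : Integrable D μ) :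
    Tendsto (fun k => ∫ x,
        smoothMax (δ k) (mollify μ (ρ k) u x) (mollify μ (ρ k) v x) * D x ∂μ) atTop
      (𝓝 (∫ x, max (u x) (v x) * D x ∂μ)) := by
  have hu_loc := hu.locallyIntegrable le_top
  have hv_loc := hv.locallyIntegrable le_top
  refine tendsto_integral_mul_of_bounded hD
    (fun k => (contDiff_smoothMax (k := 1) (hδ_ne k) (contDiff_mollify _ hu_loc)
      (contDiff_mollify _ hv_loc)).continuous.aestronglyMeasurable)
    (fun k x => (abs_smoothMax_le _ _ _).trans (add_le_add_three
      (norm_mollify_le _ (ae_norm_le_eLpNorm_top_toReal hu) x)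
      (norm_mollify_le _ (ae_norm_le_eLpNorm_top_toReal hv) x) (hδ_le k))) ?_
  filter_upwards [ae_tendsto_mollify hρ hρ' hu_loc, ae_tendsto_mollify hρ hρ' hv_loc]
    with x hux hvx
  exact tendsto_smoothMax hδ hux hvx

lemma tendsto_integral_smoothMin_mollify_mul
    (hρ : Tendsto (fun k => (ρ k).rOut) atTop (𝓝 0)) (hρ' : ∀ k, (ρ k).rOut ≤ 2 * (ρ k).rIn)
    (hδ : Tendsto δ atTop (𝓝 0)) (hδ_ne : ∀ k, δ k ≠ 0) (hδ_le : ∀ k, |δ k| ≤ 1)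
    (hu : MemLp u ∞ μ) (hv : MemLp v ∞ μ) (hD : Integrable D μ) :
    Tendsto (fun k => ∫ x,
        smoothMin (δ k) (mollify μ (ρ k) u x) (mollify μ (ρ k) v x) * D x ∂μ) atTop
      (𝓝 (∫ x, min (u x) (v x) * D x ∂μ)) := by
  have hu_loc := hu.locallyIntegrable le_top
  have hv_loc := hv.locallyIntegrable le_top
  refine tendsto_integral_mul_of_bounded hD
    (fun k => (contDiff_smoothMin (k := 1) (hδ_ne k) (contDiff_mollify _ hu_loc)
      (contDiff_mollify _ hv_loc)).continuous.aestronglyMeasurable)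
    (fun k x => (abs_smoothMin_le _ _ _).trans (add_le_add
      (mul_le_mul_of_nonneg_left (add_le_add
        (norm_mollify_le _ (ae_norm_le_eLpNorm_top_toReal hu) x)
        (norm_mollify_le _ (ae_norm_le_eLpNorm_top_toReal hv) x)) zero_le_two) (hδ_le k))) ?_
  filter_upwards [ae_tendsto_mollify hρ hρ' hu_loc, ae_tendsto_mollify hρ hρ' hv_loc]
    with x hux hvx
  exact tendsto_smoothMin hδ hux hvx

end Mollify

section CompactSupport

variable {V F : Type*} [NormedAddCommGroup V] [NormedSpace ℝ V] [NormedAddCommGroup F]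
  [NormedSpace ℝ F]

lemma contDiff_smul_add_one_sub_smul {k : WithTop ℕ∞} {θ : V → ℝ} {φ ψ : V → F}
    (hθ : ContDiff ℝ k θ) (hφ : ContDiff ℝ k φ) (hψ : ContDiff ℝ k ψ) :
    ContDiff ℝ k fun x => θ x • φ x + (1 - θ x) • ψ x :=
  (hθ.smul hφ).add ((contDiff_const.sub hθ).smul hψ)

lemma hasCompactSupport_smul_add_one_sub_smul {X : Type*} [TopologicalSpace X] {φ ψ : X → F}
    (hφ : HasCompactSupport φ) (hψ : HasCompactSupport ψ) (θ : X → ℝ) :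
    HasCompactSupport fun x => θ x • φ x + (1 - θ x) • ψ x :=
  (hφ.smul_left (f := θ)).add (hψ.smul_left (f := fun x => 1 - θ x))

variable [MeasurableSpace V] [BorelSpace V] {μ : Measure V} {f c : V → ℝ}

lemma integrable_fderiv_apply [IsFiniteMeasureOnCompacts μ] {φ : V → V} (hf : ContDiff ℝ 1 f)
    (hφ : Continuous φ) (hφc : HasCompactSupport φ) :
    Integrable (fun x => fderiv ℝ f x (φ x)) μ :=
  ((hf.continuous_fderiv one_ne_zero).clm_apply hφ).integrable_of_hasCompactSupport <|
    hφc.mono fun x hx hφx => hx (by simp only [hφx, map_zero])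

lemma integral_mul_fderiv_apply_eq_neg [FiniteDimensional ℝ V] [μ.IsAddHaarMeasure]
    (hf : ContDiff ℝ 1 f) (hc : ContDiff ℝ 1 c) (hcc : HasCompactSupport c) (e : V) :
    ∫ x, f x * fderiv ℝ c x e ∂μ = -∫ x, fderiv ℝ f x e * c x ∂μ := by
  have hf' : Continuous fun x => fderiv ℝ f x e :=
    (hf.continuous_fderiv one_ne_zero).clm_apply continuous_const
  have hc' : Continuous fun x => fderiv ℝ c x e :=
    (hc.continuous_fderiv one_ne_zero).clm_apply continuous_const
  exact integral_mul_fderiv_eq_neg_fderiv_mul_of_integrable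
    ((hf'.mul hc.continuous).integrable_of_hasCompactSupport hcc.mul_left)
    ((hf.continuous.mul hc').integrable_of_hasCompactSupport (hcc.fderiv_apply ℝ e).mul_left)
    ((hf.continuous.mul hc.continuous).integrable_of_hasCompactSupport hcc.mul_left)
    (fun x _ => hf.differentiable one_ne_zero x) fun x _ => hc.differentiable one_ne_zero x

end CompactSupport

section Variation

variable {n : ℕ} {Ω Ω' : Set (EuclideanSpace ℝ (Fin n))}
  {φ ψ : EuclideanSpace ℝ (Fin n) → EuclideanSpace ℝ (Fin n)}
  {f u v : EuclideanSpace ℝ (Fin n) → ℝ}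

lemma continuous_divg (hφ : ContDiff ℝ 1 φ) : Continuous (divg φ) := by
  have := hφ.continuous_fderiv one_ne_zero
  unfold divg
  fun_prop

lemma divg_eq_zero_of_notMem_tsupport {x : EuclideanSpace ℝ (Fin n)} (hx : x ∉ tsupport φ) :
    divg φ x = 0 := by
  simp [divg, fderiv_of_notMem_tsupport ℝ hx]

lemma hasCompactSupport_divg (hφ : HasCompactSupport φ) : HasCompactSupport (divg φ) :=
  .intro hφ fun _ => divg_eq_zero_of_notMem_tsupport

lemma divg_zero : divg (0 : EuclideanSpace ℝ (Fin n) → EuclideanSpace ℝ (Fin n)) = 0 := by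
  ext x
  simp [divg]

lemma divg_comp_add_right (t x : EuclideanSpace ℝ (Fin n)) :
    divg (fun y => φ (y + t)) x = divg φ (x + t) := by
  simp only [divg, fderiv_comp_add_right]

lemma divg_eq_sum_fderiv_apply {x : EuclideanSpace ℝ (Fin n)} (hφ : DifferentiableAt ℝ φ x) :
    divg φ x = ∑ i, fderiv ℝ (fun y => φ y i) x (EuclideanSpace.single i 1) := by
  refine Finset.sum_congr rfl fun i _ => ?_
  have hcomp := (EuclideanSpace.proj (𝕜 := ℝ) i).hasFDerivAt.comp x hφ.hasFDerivAt
  exact (congrArg (· (EuclideanSpace.single i 1)) hcomp.fderiv).symm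

lemma clm_apply_eq_sum_single (ℓ : EuclideanSpace ℝ (Fin n) →L[ℝ] ℝ)
    (z : EuclideanSpace ℝ (Fin n)) : ℓ z = ∑ i, ℓ (EuclideanSpace.single i 1) * z i := by
  conv_lhs => rw [← (EuclideanSpace.basisFun (Fin n) ℝ).sum_repr z]
  simp [mul_comm]

lemma integrable_divg (hφ : ContDiff ℝ 1 φ) (hφc : HasCompactSupport φ) : Integrable (divg φ) :=
  (continuous_divg hφ).integrable_of_hasCompactSupport (hasCompactSupport_divg hφc)

lemma integral_mul_divg_eq_neg_integral_fderiv_apply (hf : ContDiff ℝ 1 f) (hφ : ContDiff ℝ 1 φ)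
    (hφc : HasCompactSupport φ) :
    ∫ x, f x * divg φ x = -∫ x, fderiv ℝ f x (φ x) := by
  have hφi (i : Fin n) : ContDiff ℝ 1 fun x => φ x i := contDiff_euclidean.1 hφ i
  have hφic (i : Fin n) : HasCompactSupport fun x => φ x i :=
    hφc.comp_left (g := fun z : EuclideanSpace ℝ (Fin n) => z i) rfl
  simp_rw [divg_eq_sum_fderiv_apply (hφ.differentiable one_ne_zero _), Finset.mul_sum,
    fun x => clm_apply_eq_sum_single (fderiv ℝ f x) (φ x)]
  rw [integral_finsetSum _ fun i _ => ?_, integral_finsetSum _ fun i _ => ?_,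
    ← Finset.sum_neg_distrib]
  · exact Finset.sum_congr rfl fun i _ => integral_mul_fderiv_apply_eq_neg hf (hφi i) (hφic i) _
  · have hf' := hf.continuous_fderiv one_ne_zero
    exact ((hf'.clm_apply continuous_const).mul (hφi i).continuous).integrable_of_hasCompactSupport
      (hφic i).mul_left
  · have hφ' := (hφi i).continuous_fderiv one_ne_zero
    exact (hf.continuous.mul (hφ'.clm_apply continuous_const)).integrable_of_hasCompactSupport
      ((hφic i).fderiv_apply ℝ _).mul_left

lemma admissible_zero : Admissible Ω 0 :=
  ⟨contDiff_const, .zero, by simp [tsupport], by simp⟩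

lemma Admissible.of_tsupport_subset (hφ : Admissible Ω' φ) (h : tsupport φ ⊆ Ω) : Admissible Ω φ :=
  ⟨hφ.1, hφ.2.1, h, hφ.2.2.2⟩

lemma Admissible.convexComb (hφ : Admissible Ω φ) (hψ : Admissible Ω ψ)
    {θ : EuclideanSpace ℝ (Fin n) → ℝ} (hθ : ContDiff ℝ 1 θ) (hθI : ∀ x, θ x ∈ Icc (0 : ℝ) 1) :
    Admissible Ω fun x => θ x • φ x + (1 - θ x) • ψ x := by
  obtain ⟨hφ1, hφc, hφΩ, hφ_le⟩ := hφ
  obtain ⟨hψ1, hψc, hψΩ, hψ_le⟩ := hψ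
  refine ⟨contDiff_smul_add_one_sub_smul hθ hφ1 hψ1,
    hasCompactSupport_smul_add_one_sub_smul hφc hψc θ, ?_, fun x => ?_⟩
  · exact (tsupport_add _ _).trans <| union_subset
      ((tsupport_smul_subset_right θ φ).trans hφΩ)
      ((tsupport_smul_subset_right (fun x => 1 - θ x) ψ).trans hψΩ)
  · have hball := convex_closedBall (0 : EuclideanSpace ℝ (Fin n)) 1
      (mem_closedBall_zero_iff.2 (hφ_le x)) (mem_closedBall_zero_iff.2 (hψ_le x))
      (hθI x).1 (sub_nonneg.2 (hθI x).2) (add_sub_cancel _ _)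
    exact mem_closedBall_zero_iff.1 hball

lemma Admissible.comp_add_right (hφ : Admissible Ω' φ) {r : ℝ} {t : EuclideanSpace ℝ (Fin n)}
    (hΩ : thickening r Ω' ⊆ Ω) (ht : ‖t‖ < r) : Admissible Ω fun x => φ (x + t) := by
  obtain ⟨hφ1, hφc, hφΩ, hφ_le⟩ := hφ
  refine ⟨hφ1.comp (contDiff_id.add contDiff_const),
    hφc.comp_homeomorph (Homeomorph.addRight t), fun x hx => hΩ ?_, fun x => hφ_le _⟩
  rw [show (fun x => φ (x + t)) = φ ∘ Homeomorph.addRight t from rfl,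
    tsupport_comp_eq_preimage] at hx
  exact mem_thickening_iff.2 ⟨x + t, hφΩ hx, by simpa [dist_eq_norm] using ht⟩

lemma setIntegral_mul_divg (hφ : tsupport φ ⊆ Ω) :
    ∫ x in Ω, u x * divg φ x = ∫ x, u x * divg φ x :=
  setIntegral_eq_integral_of_forall_compl_eq_zero fun x hx => by
    rw [divg_eq_zero_of_notMem_tsupport fun hx' => hx (hφ hx'), mul_zero]

lemma ofReal_integral_le_var (hφ : Admissible Ω φ) :
    ENNReal.ofReal (∫ x, u x * divg φ x) ≤ var Ω u := by
  rw [← setIntegral_mul_divg hφ.2.2.1]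
  exact le_iSup₂ (f := fun φ (_ : φ ∈ {φ | Admissible Ω φ}) =>
    ENNReal.ofReal (∫ x in Ω, u x * divg φ x)) φ hφ

lemma ofReal_integral_add_integral_le_var_add_var (hφ : Admissible Ω φ) (hψ : Admissible Ω ψ) :
    ENNReal.ofReal ((∫ x, u x * divg φ x) + ∫ x, v x * divg ψ x) ≤ var Ω u + var Ω v :=
  ENNReal.ofReal_add_le.trans
    (add_le_add (ofReal_integral_le_var hφ) (ofReal_integral_le_var hψ))

lemma var_le_of_forall {c : ℝ≥0∞}
    (h : ∀ φ, Admissible Ω φ → ENNReal.ofReal (∫ x, u x * divg φ x) ≤ c) : var Ω u ≤ c :=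
  iSup₂_le fun φ hφ => (setIntegral_mul_divg hφ.2.2.1).symm ▸ h φ hφ

lemma var_add_var_le_of_forall {c : ℝ≥0∞} (h : ∀ φ ψ, Admissible Ω φ → Admissible Ω ψ →
      ENNReal.ofReal ((∫ x, u x * divg φ x) + ∫ x, v x * divg ψ x) ≤ c) :
    var Ω u + var Ω v ≤ c := by
  refine ENNReal.biSup_add_biSup_le' ⟨0, admissible_zero⟩ ⟨0, admissible_zero⟩
    fun φ (hφ : Admissible Ω φ) ψ (hψ : Admissible Ω ψ) => ?_
  rw [setIntegral_mul_divg hφ.2.2.1, setIntegral_mul_divg hψ.2.2.1]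
  rcases le_total 0 (∫ x, u x * divg φ x) with hu | hu
  · rcases le_total 0 (∫ x, v x * divg ψ x) with hv | hv
    · exact (ENNReal.ofReal_add hu hv).symm.trans_le (h φ ψ hφ hψ)
    · simpa [ENNReal.ofReal_of_nonpos hv, divg_zero] using h φ 0 hφ admissible_zero
  · simpa [ENNReal.ofReal_of_nonpos hu, divg_zero] using h 0 ψ admissible_zero hψ

lemma integral_smoothMax_mul_divg_add_integral_smoothMin_mul_divg {δ : ℝ} (hδ : δ ≠ 0)
    (hu : ContDiff ℝ 1 u) (hv : ContDiff ℝ 1 v) (hφ : ContDiff ℝ 1 φ) (hφc : HasCompactSupport φ)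
    (hψ : ContDiff ℝ 1 ψ) (hψc : HasCompactSupport ψ) {w : EuclideanSpace ℝ (Fin n) → ℝ}
    (hw : w = fun x => smoothMaxWeight δ (u x) (v x)) :
    (∫ x, smoothMax δ (u x) (v x) * divg φ x) + ∫ x, smoothMin δ (u x) (v x) * divg ψ x =
      (∫ x, u x * divg (fun y => w y • φ y + (1 - w y) • ψ y) x) +
        ∫ x, v x * divg (fun y => w y • ψ y + (1 - w y) • φ y) x := by
  have hM := contDiff_smoothMax hδ hu hv
  have hm := contDiff_smoothMin hδ hu hv
  have hw1 : ContDiff ℝ 1 w := hw ▸ contDiff_smoothMaxWeight hδ hu hv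
  have hξ := contDiff_smul_add_one_sub_smul hw1 hφ hψ
  have hξc := hasCompactSupport_smul_add_one_sub_smul hφc hψc w
  have hζ := contDiff_smul_add_one_sub_smul hw1 hψ hφ
  have hζc := hasCompactSupport_smul_add_one_sub_smul hψc hφc w
  simp only [integral_mul_divg_eq_neg_integral_fderiv_apply, hM, hm, hu, hv, hφ, hφc, hψ, hψc, hξ,
    hξc, hζ, hζc]
  rw [← neg_add, ← neg_add,
    ← integral_add (integrable_fderiv_apply hM hφ.continuous hφc)
      (integrable_fderiv_apply hm hψ.continuous hψc),
    ← integral_add (integrable_fderiv_apply hu hξ.continuous hξc)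
      (integrable_fderiv_apply hv hζ.continuous hζc)]
  congr 2 with x
  have hu' := (hu.differentiable one_ne_zero x).hasFDerivAt
  have hv' := (hv.differentiable one_ne_zero x).hasFDerivAt
  rw [(hasFDerivAt_smoothMax hδ hu' hv').fderiv, (hasFDerivAt_smoothMin hδ hu' hv').fderiv, hw]
  simp only [add_apply, smul_apply, smul_eq_mul, map_add, map_smul]
  ring

lemma var_smoothMax_add_var_smoothMin_le {δ : ℝ} (hδ : δ ≠ 0) (hu : ContDiff ℝ 1 u)
    (hv : ContDiff ℝ 1 v) :
    (var Ω fun x => smoothMax δ (u x) (v x)) + (var Ω fun x => smoothMin δ (u x) (v x)) ≤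
      var Ω u + var Ω v := by
  refine var_add_var_le_of_forall fun φ ψ hφ hψ => ?_
  have hw1 := contDiff_smoothMaxWeight hδ hu hv
  have hwI (x) := smoothMaxWeight_mem_Icc δ (u x) (v x)
  rw [integral_smoothMax_mul_divg_add_integral_smoothMin_mul_divg hδ hu hv hφ.1 hφ.2.1 hψ.1
    hψ.2.1 rfl]
  exact ofReal_integral_add_integral_le_var_add_var (hφ.convexComb hψ hw1 hwI)
    (hψ.convexComb hφ hw1 hwI)

lemma var_mollify_le {ρ : ContDiffBump (0 : EuclideanSpace ℝ (Fin n))}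
    (hΩ : thickening ρ.rOut Ω' ⊆ Ω) (hu : MemLp u ∞ volume) :
    var Ω' (mollify volume ρ u) ≤ var Ω u := by
  by_cases hvar : var Ω u = ⊤
  · exact hvar ▸ le_top
  refine var_le_of_forall fun φ hφ => ENNReal.ofReal_le_of_le_toReal <|
    integral_convolution_mul_le ρ.integrable_normed ρ.nonneg_normed ρ.integral_normed hu
      (integrable_divg hφ.1 hφ.2.1) fun t ht => ?_
  rw [ρ.support_normed_eq, mem_ball_zero_iff] at ht
  simp_rw [← divg_comp_add_right (φ := φ) t]
  exact (ENNReal.ofReal_le_iff_le_toReal hvar).1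
    (ofReal_integral_le_var (hφ.comp_add_right hΩ ht))

lemma var_smoothMax_mollify_add_var_smoothMin_mollify_le {δ : ℝ} (hδ : δ ≠ 0)
    {ρ : ContDiffBump (0 : EuclideanSpace ℝ (Fin n))} (hΩ : thickening ρ.rOut Ω' ⊆ Ω)
    (hu : MemLp u ∞ volume) (hv : MemLp v ∞ volume) :
    (var Ω' fun x => smoothMax δ (mollify volume ρ u x) (mollify volume ρ v x)) +
      (var Ω' fun x => smoothMin δ (mollify volume ρ u x) (mollify volume ρ v x)) ≤
      var Ω u + var Ω v :=
  (var_smoothMax_add_var_smoothMin_le hδ (contDiff_mollify ρ (hu.locallyIntegrable le_top))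
    (contDiff_mollify ρ (hv.locallyIntegrable le_top))).trans
    (add_le_add (var_mollify_le hΩ hu) (var_mollify_le hΩ hv))

lemma ofReal_integral_sup_add_integral_inf_le (hΩ : IsOpen Ω) (hu : MemLp u ∞ volume)
    (hv : MemLp v ∞ volume) (hφ : Admissible Ω φ) (hψ : Admissible Ω ψ) :
    ENNReal.ofReal ((∫ x, (u ⊔ v) x * divg φ x) + ∫ x, (u ⊓ v) x * divg ψ x) ≤
      var Ω u + var Ω v := by
  obtain ⟨ρ, hρ, hρ'⟩ := exists_seq_contDiffBump (EuclideanSpace ℝ (Fin n))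
  let δ : ℕ → ℝ := fun k => 1 / (k + 1)
  have hδ : Tendsto δ atTop (𝓝 0) := tendsto_one_div_add_atTop_nhds_zero_nat
  have hδ_ne (k : ℕ) : δ k ≠ 0 := Nat.one_div_pos_of_nat.ne'
  have hδ_le (k : ℕ) : |δ k| ≤ 1 := by
    rw [abs_of_pos Nat.one_div_pos_of_nat]
    exact Nat.one_div_le_one_div k.zero_le |>.trans (by norm_num)
  refine le_of_tendsto (ENNReal.tendsto_ofReal <|
    (tendsto_integral_smoothMax_mollify_mul hρ hρ' hδ hδ_ne hδ_le hu hv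
      (integrable_divg hφ.1 hφ.2.1)).add
    (tendsto_integral_smoothMin_mollify_mul hρ hρ' hδ hδ_ne hδ_le hu hv
      (integrable_divg hψ.1 hψ.2.1))) ?_
  obtain ⟨ε, hε, hεΩ⟩ := (hφ.2.1.isCompact.union hψ.2.1.isCompact).exists_thickening_subset_open hΩ
    (union_subset hφ.2.2.1 hψ.2.2.1)
  filter_upwards [hρ.eventually_lt_const hε] with k hk
  exact (ofReal_integral_add_integral_le_var_add_var (hφ.of_tsupport_subset subset_union_left)
    (hψ.of_tsupport_subset subset_union_right)).trans <|
      var_smoothMax_mollify_add_var_smoothMin_mollify_le (hδ_ne k)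
        ((thickening_mono hk.le _).trans hεΩ) hu hv

lemma var_sup_add_var_inf_le (hΩ : IsOpen Ω) (hu : MemLp u ∞ volume) (hv : MemLp v ∞ volume) :
    var Ω (u ⊔ v) + var Ω (u ⊓ v) ≤ var Ω u + var Ω v :=
  var_add_var_le_of_forall fun _ _ => ofReal_integral_sup_add_integral_inf_le hΩ hu hv

lemma perim_union_add_perim_inter_le {A B : Set (EuclideanSpace ℝ (Fin n))} (hΩ : IsOpen Ω)
    (hA : NullMeasurableSet A) (hB : NullMeasurableSet B) :
    perim (A ∪ B) Ω + perim (A ∩ B) Ω ≤ perim A Ω + perim B Ω := by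
  have hmemLp {E : Set (EuclideanSpace ℝ (Fin n))} (hE : NullMeasurableSet E) :
      MemLp (E.indicator (1 : EuclideanSpace ℝ (Fin n) → ℝ)) ∞ volume :=
    memLp_top_of_bound (aestronglyMeasurable_one.indicator₀ hE) 1
      (.of_forall fun x => (norm_indicator_le_norm_self _ x).trans norm_one.le)
  have hunion : (A ∪ B).indicator (1 : EuclideanSpace ℝ (Fin n) → ℝ) =
      A.indicator 1 ⊔ B.indicator 1 := by
    ext x
    by_cases hxA : x ∈ A <;> by_cases hxB : x ∈ B <;> simp [hxA, hxB]
  have hinter : (A ∩ B).indicator (1 : EuclideanSpace ℝ (Fin n) → ℝ) =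
      A.indicator 1 ⊓ B.indicator 1 := by
    ext x
    by_cases hxA : x ∈ A <;> by_cases hxB : x ∈ B <;> simp [hxA, hxB]
  unfold perim
  rw [hunion, hinter]
  exact var_sup_add_var_inf_le hΩ (hmemLp hA) (hmemLp hB)

end Variation

theorem max_volume_minimizer_unique_general {n : ℕ} {Ω₀ : Set (EuclideanSpace ℝ (Fin n))}
    (hΩ₀ : IsOpen Ω₀) {C : Set (Set (EuclideanSpace ℝ (Fin n)))} (hC : IsSublattice C)
    (hmeas : ∀ E ∈ C, NullMeasurableSet E) {E₁ E₂ : Set (EuclideanSpace ℝ (Fin n))}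
    (h₁ : E₁ ∈ minimizersOn (perim · Ω₀) C) (h₂ : E₂ ∈ minimizersOn (perim · Ω₀) C)
    (hfin : volume E₁ ≠ ⊤) (hmax₁ : IsMaxOn volume (minimizersOn (perim · Ω₀) C) E₁)
    (hmax₂ : IsMaxOn volume (minimizersOn (perim · Ω₀) C) E₂) :
    volume (E₁ ∆ E₂) = 0 := by
  have hclosed : SupClosed (minimizersOn (perim · Ω₀) C) :=
    supClosed_minimizersOn hC fun A hA B hB =>
      perim_union_add_perim_inter_le hΩ₀ (hmeas A hA) (hmeas B hB)
  exact measure_symmDiff_eq_zero_iff.2 <| ae_eq_of_isMaxOn_measure hclosed h₁ h₂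
    (hmeas E₁ h₁.1) (hmeas E₂ h₂.1) hfin hmax₁ hmax₂

/-- among the perimeter minimizers (in `Ω₀`, subject to the constraint
`E \ closure Ω = L \ closure Ω`), a minimizer of maximal Lebesgue measure is unique
up to a null set. -/
theorem max_volume_minimizer_unique
    (Ω Ω₀ : Set E2) (hΩ : IsOpen Ω) (hΩ₀ : IsOpen Ω₀) (hsub : Ω ⊆ Ω₀)
    (hbΩ : IsBounded Ω) (hbΩ₀ : IsBounded Ω₀)
    (L : Set E2) (hL : MeasurableSet L) (hLsub : L ⊆ Ω₀)
    (hLper : perim L (Ω₀ \ closure Ω) ≠ ⊤)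
    (Adm : Set (Set E2))
    (hAdm : Adm = {E | MeasurableSet E ∧ E ⊆ Ω₀ ∧ E \ closure Ω = L \ closure Ω})
    (E₁ E₂ : Set E2) (h1A : E₁ ∈ Adm) (h2A : E₂ ∈ Adm)
    (h1min : ∀ F ∈ Adm, perim E₁ Ω₀ ≤ perim F Ω₀)
    (h2min : ∀ F ∈ Adm, perim E₂ Ω₀ ≤ perim F Ω₀)
    (h1max : ∀ F ∈ Adm, (∀ G ∈ Adm, perim F Ω₀ ≤ perim G Ω₀) → volume F ≤ volume E₁)
    (h2max : ∀ F ∈ Adm, (∀ G ∈ Adm, perim F Ω₀ ≤ perim G Ω₀) → volume F ≤ volume E₂) :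
    volume (E₁ ∆ E₂) = 0 := by
  subst hAdm
  have hfin : volume E₁ ≠ ⊤ := ((measure_mono h1A.2.1).trans_lt hbΩ₀.measure_lt_top).ne
  exact max_volume_minimizer_unique_general hΩ₀
    (isSublattice_setOf_measurableSet_subset_sdiff_eq Ω₀ (closure Ω) L)
    (fun E hE => hE.1.nullMeasurableSet) ⟨h1A, h1min⟩ ⟨h2A, h2min⟩ hfin
    (fun F hF => h1max F hF.1 hF.2) (fun F hF => h2max F hF.1 hF.2)
end
end

section
/- In the setting of the rectangle foliation by segments ℓ^t (level segments), the function w : Ω → ℝ defined by w(x) = t if x ∈ ℓ^t is continuous on Ω; moreover it satisfies the modulus-of-continuity estimate |w(x₁) − w(x₂)| ≤ ω(c₁|x₁−x₂| + c₂√|x₁−x₂|) for all x₁, x₂ ∈ Ω, where ω is the modulus of continuity of f and c₁, c₂ depend only on Ω. -/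
open MeasureTheory Set Filter Metric Bornology
open scoped ENNReal symmDiff Topology

noncomputable section

/-!
Both arcs are chains for the coordinatewise order, so a function strictly monotone along each of
them, in directions that agree at the common endpoints, lists the level segments in order. After
normalizing the rectangle to the unit square, consider two such segments whose endpoints are at
distance at least `m` on both arcs. Some linear functional of norm at most `2` separates them with a
gap of at least `m ^ 2 / 2`: a suitable one of the two functionals constant along one of the
segments, or the sum of the coordinates if the segments cut off opposite corners of the square and
all their endpoints stay far apart. Hence points of the two segments are at distance at least
`m ^ 2 / 4`. Read backwards, `x₁` and `x₂` lie on segments with a pair of endpoints on the same arc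
at distance `O(√|x₁ - x₂|)`, where the modulus of continuity of `f` applies.
-/

section HasGap

variable {E : Type*} [SeminormedAddCommGroup E] [NormedSpace ℝ E]

/-- The functional `φ` separates `s` from `t` with a gap of at least `ε`: every value of `φ` on `t`
exceeds every value of `φ` on `s` by at least `ε`. -/
def HasGap (φ : StrongDual ℝ E) (ε : ℝ) (s t : Set E) : Prop :=
  ∀ x ∈ s, ∀ y ∈ t, φ x + ε ≤ φ y

variable {φ : StrongDual ℝ E} {ε : ℝ} {s t : Set E}

theorem HasGap.mono {δ : ℝ} (h : HasGap φ ε s t) (hδ : δ ≤ ε) : HasGap φ δ s t :=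
  fun x hx y hy => (add_le_add_right hδ _).trans (h x hx y hy)

theorem HasGap.convexHull (h : HasGap φ ε s t) :
    HasGap φ ε (convexHull ℝ s) (convexHull ℝ t) := by
  have hull_left : HasGap φ ε (_root_.convexHull ℝ s) t := fun x hx y hy =>
    le_sub_iff_add_le.1 <| convexHull_min (fun z hz => le_sub_iff_add_le.2 (h z hz y hy))
      (convex_halfSpace_le φ.isLinear _) hx
  exact fun x hx y hy => convexHull_min (hull_left x hx) (convex_halfSpace_ge φ.isLinear _) hy

theorem HasGap.le_norm_mul_dist (h : HasGap φ ε s t) {x y : E} (hx : x ∈ s) (hy : y ∈ t) :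
    ε ≤ ‖φ‖ * dist x y :=
  calc ε ≤ φ (y - x) := by rw [map_sub]; linarith [h x hx y hy]
    _ ≤ ‖φ (y - x)‖ := Real.le_norm_self _
    _ ≤ ‖φ‖ * ‖y - x‖ := φ.le_opNorm _
    _ = ‖φ‖ * dist x y := by rw [dist_comm, dist_eq_norm]

theorem hasGap_pair_of_apply_eq {p₁ p₂ q₁ q₂ : E} (hp : ε ≤ φ (p₂ - p₁)) (hq : ε ≤ φ (q₂ - q₁))
    (heq : φ p₁ = φ q₁ ∨ φ p₂ = φ q₂) : HasGap φ ε {p₁, q₁} {p₂, q₂} := by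
  rw [map_sub] at hp hq
  rintro x (rfl | rfl) y (rfl | rfl) <;> rcases heq with heq | heq <;> linarith

end HasGap

section UnitSquare

/-- The union of the left and top sides of the unit square `[0,1]²`, the normalized form of the
arc `Γ₁`. -/
def upperLeft : Set (ℝ × ℝ) :=
  {p | p ∈ Icc (0 : ℝ) 1 ×ˢ Icc (0 : ℝ) 1 ∧ (p.1 = 0 ∨ p.2 = 1)}

/-- The union of the bottom and right sides of the unit square `[0,1]²`, the normalized form of
the arc `Γ₂`. -/
def lowerRight : Set (ℝ × ℝ) :=
  {p | p ∈ Icc (0 : ℝ) 1 ×ˢ Icc (0 : ℝ) 1 ∧ (p.2 = 0 ∨ p.1 = 1)}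

theorem swap_mem_upperLeft {p : ℝ × ℝ} : p.swap ∈ upperLeft ↔ p ∈ lowerRight := by
  simp only [upperLeft, lowerRight, mem_ofPred_eq, mem_prod, Prod.fst_swap, Prod.snd_swap,
    and_comm]

theorem swap_mem_lowerRight {p : ℝ × ℝ} : p.swap ∈ lowerRight ↔ p ∈ upperLeft := by
  rw [← swap_mem_upperLeft, Prod.swap_swap]

theorem dist_swap_swap (p q : ℝ × ℝ) : dist p.swap q.swap = dist p q := by
  simp only [Prod.dist_eq, Prod.fst_swap, Prod.snd_swap, max_comm]

theorem isChain_upperLeft : IsChain (· ≤ ·) upperLeft := by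
  rintro ⟨a, b⟩ ⟨⟨⟨ha₀, -⟩, -, hb₁⟩, hab⟩ ⟨c, d⟩ ⟨⟨⟨hc₀, -⟩, -, hd₁⟩, hcd⟩ -
  simp only [Prod.mk_le_mk] at *
  rcases hab with rfl | rfl <;> rcases hcd with rfl | rfl
  · exact (le_total b d).imp (⟨le_rfl, ·⟩) (⟨le_rfl, ·⟩)
  · exact Or.inl ⟨hc₀, hb₁⟩
  · exact Or.inr ⟨ha₀, hd₁⟩
  · exact (le_total a c).imp (⟨·, le_rfl⟩) (⟨·, le_rfl⟩)

theorem isChain_lowerRight : IsChain (· ≤ ·) lowerRight := fun p hp q hq hpq => by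
  simpa only [Prod.swap_le_swap] using isChain_upperLeft (swap_mem_upperLeft.2 hp)
    (swap_mem_upperLeft.2 hq) (Prod.swap_injective.ne hpq)

theorem dist_eq_max_sub_of_le {p q : ℝ × ℝ} (hpq : p ≤ q) :
    dist p q = max (q.1 - p.1) (q.2 - p.2) := by
  rw [dist_comm, Prod.dist_eq, Real.dist_eq, Real.dist_eq,
    abs_of_nonneg (sub_nonneg.2 hpq.1), abs_of_nonneg (sub_nonneg.2 hpq.2)]

/-- The linear functional on the plane with coefficients `a` and `b`. -/
def coordForm (a b : ℝ) : StrongDual ℝ (ℝ × ℝ) :=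
  a • .fst ℝ ℝ ℝ + b • .snd ℝ ℝ ℝ

theorem coordForm_apply (a b : ℝ) (z : ℝ × ℝ) : coordForm a b z = a * z.1 + b * z.2 := rfl

theorem norm_coordForm_le (a b : ℝ) : ‖coordForm a b‖ ≤ |a| + |b| := by
  refine (norm_add_le _ _).trans_eq ?_
  simp only [norm_smul, ContinuousLinearMap.norm_fst, ContinuousLinearMap.norm_snd, mul_one,
    Real.norm_eq_abs]

/-- The linear functional whose level lines are parallel to the chord `[p, q]`; `chordForm p q z`
is the determinant of `q - p` and `z`. -/
def chordForm (p q : ℝ × ℝ) : StrongDual ℝ (ℝ × ℝ) :=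
  coordForm (p.2 - q.2) (q.1 - p.1)

theorem chordForm_apply (p q z : ℝ × ℝ) :
    chordForm p q z = (p.2 - q.2) * z.1 + (q.1 - p.1) * z.2 :=
  coordForm_apply _ _ _

theorem chordForm_left_eq_right (p q : ℝ × ℝ) : chordForm p q p = chordForm p q q := by
  simp only [chordForm_apply]; ring

theorem chordForm_swap (p q z : ℝ × ℝ) :
    chordForm q.swap p.swap z.swap = chordForm p q z := by
  simp only [chordForm_apply, Prod.fst_swap, Prod.snd_swap]; ring

theorem norm_chordForm_le {p q : ℝ × ℝ} (hp : p ∈ upperLeft) (hq : q ∈ lowerRight) :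
    ‖chordForm p q‖ ≤ 2 := by
  obtain ⟨⟨hpx, hpy⟩, -⟩ := hp
  obtain ⟨⟨hqx, hqy⟩, -⟩ := hq
  calc ‖chordForm p q‖ ≤ |p.2 - q.2| + |q.1 - p.1| := norm_coordForm_le _ _
    _ ≤ (1 - 0) + (1 - 0) := by
        gcongr
        · exact abs_sub_le_of_le_of_le hpy.1 hpy.2 hqy.1 hqy.2
        · exact abs_sub_le_of_le_of_le hqx.1 hqx.2 hpx.1 hpx.2
    _ = 2 := by norm_num

/-- Replacing one chord by the other changes both determinants by the same amount. -/
theorem chordForm_sub_chordForm_eq (p₁ p₂ q₁ q₂ : ℝ × ℝ) :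
    chordForm p₂ q₂ (p₂ - p₁) - chordForm p₁ q₁ (p₂ - p₁) =
      chordForm p₂ q₂ (q₂ - q₁) - chordForm p₁ q₁ (q₂ - q₁) := by
  simp only [chordForm_apply, Prod.fst_sub, Prod.snd_sub]; ring

theorem sq_le_convexCombo {m a x y : ℝ} (hm₀ : 0 ≤ m) (hm₁ : m ≤ 1) (ha : m ≤ a) (hx : 0 ≤ x)
    (hy₀ : 0 ≤ y) (hy₁ : y ≤ 1) (hxy : m ≤ max x y) : m ^ 2 ≤ y * a + (1 - y) * x := by
  rcases le_max_iff.1 hxy with hmx | hmy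
  · calc m ^ 2 ≤ y * m + (1 - y) * m := by nlinarith
      _ ≤ y * a + (1 - y) * x := by
        have := sub_nonneg.2 hy₁
        gcongr
  · nlinarith [mul_le_mul hmy ha hm₀ hy₀, mul_nonneg (sub_nonneg.2 hy₁) hx]

/-- Two chords `[p₁, q₁]` and `[p₂, q₂]` of the unit square, each joining the two arcs, such that
the endpoints of the second lie beyond those of the first on the way from `(0, 0)` to `(1, 1)`. -/
structure IsOrderedChordPair (p₁ q₁ p₂ q₂ : ℝ × ℝ) : Prop where
  left_mem₁ : p₁ ∈ upperLeft
  right_mem₁ : q₁ ∈ lowerRight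
  left_mem₂ : p₂ ∈ upperLeft
  right_mem₂ : q₂ ∈ lowerRight
  left_le : p₁ ≤ p₂
  right_le : q₁ ≤ q₂

namespace IsOrderedChordPair

variable {p₁ p₂ q₁ q₂ : ℝ × ℝ} {m : ℝ}

theorem swap (H : IsOrderedChordPair p₁ q₁ p₂ q₂) :
    IsOrderedChordPair q₁.swap p₁.swap q₂.swap p₂.swap where
  left_mem₁ := swap_mem_upperLeft.2 H.right_mem₁
  right_mem₁ := swap_mem_lowerRight.2 H.left_mem₁
  left_mem₂ := swap_mem_upperLeft.2 H.right_mem₂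
  right_mem₂ := swap_mem_lowerRight.2 H.left_mem₂
  left_le := Prod.swap_le_swap.2 H.right_le
  right_le := Prod.swap_le_swap.2 H.left_le

theorem dist_right_le_one_sub_snd (H : IsOrderedChordPair p₁ q₁ p₂ q₂) :
    dist q₁ q₂ ≤ 1 - q₁.2 := by
  obtain ⟨-, ⟨⟨⟨hx₁, -⟩, -⟩, hside⟩, -, ⟨⟨⟨-, hx₂⟩, -, hy₂⟩, -⟩, -, hq⟩ := H
  rw [dist_eq_max_sub_of_le hq, max_le_iff]
  refine ⟨?_, by linarith⟩
  rcases hside with hbottom | hright <;> linarith [hq.2]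

theorem dist_right_le_fst (H : IsOrderedChordPair p₁ q₁ p₂ q₂) : dist q₁ q₂ ≤ q₂.1 := by
  obtain ⟨-, ⟨⟨⟨hx₁, -⟩, hy₁, -⟩, -⟩, -, ⟨⟨-, -, hy₂⟩, hside⟩, -, hq⟩ := H
  rw [dist_eq_max_sub_of_le hq, max_le_iff]
  refine ⟨by linarith, ?_⟩
  rcases hside with hbottom | hright <;> linarith [hq.1]

theorem sq_le_chordForm_left_of_around_corner (H : IsOrderedChordPair p₁ q₁ p₂ q₂) (hm : 0 ≤ m)
    (hmp : m ≤ dist p₁ p₂) (hmq : m ≤ dist q₁ q₂) (hp₁ : p₁.1 = 0) (hp₂ : p₂.2 = 1)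
    (hside : q₁.1 = 1 ∨ q₂.2 = 0) :
    m ^ 2 ≤ chordForm p₁ q₁ (p₂ - p₁) ∨ m ^ 2 ≤ chordForm p₂ q₂ (p₂ - p₁) := by
  have hmq₁ : m ≤ 1 - q₁.2 := hmq.trans H.dist_right_le_one_sub_snd
  have hmq₂ : m ≤ q₂.1 := hmq.trans H.dist_right_le_fst
  have hm₁ : m ≤ 1 := hmq₂.trans H.right_mem₂.1.1.2
  rw [dist_eq_max_sub_of_le H.left_le, hp₁, hp₂, sub_zero] at hmp
  obtain ⟨⟨⟨-, hy₁, hy₁'⟩, -⟩, -, ⟨⟨⟨hx₂, hx₂'⟩, -⟩, -⟩, -⟩ := H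
  simp only [chordForm_apply, Prod.fst_sub, Prod.snd_sub, hp₁, hp₂, sub_zero]
  rcases hside with hright | hbottom
  · left
    calc m ^ 2 ≤ p₂.1 * (1 - q₁.2) + (1 - p₂.1) * (1 - p₁.2) :=
          sq_le_convexCombo hm hm₁ hmq₁ (sub_nonneg.2 hy₁') hx₂ hx₂' (max_comm p₂.1 _ ▸ hmp)
      _ = _ := by rw [hright]; ring
  · right
    calc m ^ 2 ≤ (1 - p₁.2) * q₂.1 + (1 - (1 - p₁.2)) * p₂.1 :=
          sq_le_convexCombo hm hm₁ hmq₂ hx₂ (sub_nonneg.2 hy₁') (sub_le_self 1 hy₁) hmp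
      _ = _ := by rw [hbottom]; ring

/-- Up to a factor, the two determinants are the areas of the triangles `p₁p₂q₁` and `p₁p₂q₂`. -/
theorem sq_le_chordForm_left_of_common_side (H : IsOrderedChordPair p₁ q₁ p₂ q₂) (hm : 0 ≤ m)
    (hmp : m ≤ dist p₁ p₂) (hmq : m ≤ dist q₁ q₂)
    (hside : p₁.2 = 1 ∨ p₂.1 = 0 ∨ q₁.1 = 1 ∨ q₂.2 = 0) :
    m ^ 2 ≤ chordForm p₁ q₁ (p₂ - p₁) ∨ m ^ 2 ≤ chordForm p₂ q₂ (p₂ - p₁) := by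
  by_cases htop : p₁.2 = 1
  · have htop₂ : p₂.2 = 1 := H.left_mem₂.1.2.2.antisymm (htop ▸ H.left_le.2)
    have hmx : m ≤ p₂.1 - p₁.1 := by
      simpa [dist_eq_max_sub_of_le H.left_le, htop, htop₂, H.left_le.1] using hmp
    left
    calc m ^ 2 ≤ (1 - q₁.2) * (p₂.1 - p₁.1) := by
          rw [sq]
          exact mul_le_mul_of_nonneg (hmq.trans H.dist_right_le_one_sub_snd) hmx hm (hm.trans hmx)
      _ = chordForm p₁ q₁ (p₂ - p₁) := by
          simp only [chordForm_apply, Prod.fst_sub, Prod.snd_sub, htop, htop₂]; ring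
  by_cases hleft : p₂.1 = 0
  · have hleft₁ : p₁.1 = 0 := (hleft ▸ H.left_le.1).antisymm H.left_mem₁.1.1.1
    have hmy : m ≤ p₂.2 - p₁.2 := by
      simpa [dist_eq_max_sub_of_le H.left_le, hleft, hleft₁, H.left_le.2] using hmp
    right
    calc m ^ 2 ≤ q₂.1 * (p₂.2 - p₁.2) := by
          rw [sq]
          exact mul_le_mul_of_nonneg (hmq.trans H.dist_right_le_fst) hmy hm (hm.trans hmy)
      _ = chordForm p₂ q₂ (p₂ - p₁) := by
          simp only [chordForm_apply, Prod.fst_sub, Prod.snd_sub, hleft, hleft₁]; ring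
  exact H.sq_le_chordForm_left_of_around_corner hm hmp hmq (H.left_mem₁.2.resolve_right htop)
    (H.left_mem₂.2.resolve_left hleft) ((hside.resolve_left htop).resolve_left hleft)

theorem sq_le_chordForm_right_of_common_side (H : IsOrderedChordPair p₁ q₁ p₂ q₂) (hm : 0 ≤ m)
    (hmp : m ≤ dist p₁ p₂) (hmq : m ≤ dist q₁ q₂)
    (hside : p₁.2 = 1 ∨ p₂.1 = 0 ∨ q₁.1 = 1 ∨ q₂.2 = 0) :
    m ^ 2 ≤ chordForm p₁ q₁ (q₂ - q₁) ∨ m ^ 2 ≤ chordForm p₂ q₂ (q₂ - q₁) := by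
  have hswap := H.swap.sq_le_chordForm_left_of_common_side hm
    (by rwa [dist_swap_swap]) (by rwa [dist_swap_swap])
    (by simp only [Prod.fst_swap, Prod.snd_swap]; tauto)
  simpa only [← Prod.swap_sub, chordForm_swap] using hswap

theorem exists_hasGap_of_le_chordForm₁ {ε : ℝ} (H : IsOrderedChordPair p₁ q₁ p₂ q₂)
    (hp : ε ≤ chordForm p₁ q₁ (p₂ - p₁)) (hq : ε ≤ chordForm p₁ q₁ (q₂ - q₁)) :
    ∃ φ : StrongDual ℝ (ℝ × ℝ), ‖φ‖ ≤ 2 ∧ HasGap φ ε {p₁, q₁} {p₂, q₂} :=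
  ⟨chordForm p₁ q₁, norm_chordForm_le H.left_mem₁ H.right_mem₁,
    hasGap_pair_of_apply_eq hp hq (Or.inl (chordForm_left_eq_right p₁ q₁))⟩

theorem exists_hasGap_of_le_chordForm₂ {ε : ℝ} (H : IsOrderedChordPair p₁ q₁ p₂ q₂)
    (hp : ε ≤ chordForm p₂ q₂ (p₂ - p₁)) (hq : ε ≤ chordForm p₂ q₂ (q₂ - q₁)) :
    ∃ φ : StrongDual ℝ (ℝ × ℝ), ‖φ‖ ≤ 2 ∧ HasGap φ ε {p₁, q₁} {p₂, q₂} :=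
  ⟨chordForm p₂ q₂, norm_chordForm_le H.left_mem₂ H.right_mem₂,
    hasGap_pair_of_apply_eq hp hq (Or.inr (chordForm_left_eq_right p₂ q₂))⟩

theorem exists_hasGap_of_common_side (H : IsOrderedChordPair p₁ q₁ p₂ q₂) (hm : 0 ≤ m)
    (hmp : m ≤ dist p₁ p₂) (hmq : m ≤ dist q₁ q₂)
    (hside : p₁.2 = 1 ∨ p₂.1 = 0 ∨ q₁.1 = 1 ∨ q₂.2 = 0) :
    ∃ φ : StrongDual ℝ (ℝ × ℝ), ‖φ‖ ≤ 2 ∧ HasGap φ (m ^ 2) {p₁, q₁} {p₂, q₂} := by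
  have hshift := chordForm_sub_chordForm_eq p₁ p₂ q₁ q₂
  have hleft := H.sq_le_chordForm_left_of_common_side hm hmp hmq hside
  have hright := H.sq_le_chordForm_right_of_common_side hm hmp hmq hside
  rcases le_total (chordForm p₁ q₁ (p₂ - p₁)) (chordForm p₂ q₂ (p₂ - p₁)) with hle | hle
  · exact H.exists_hasGap_of_le_chordForm₂ (hleft.elim (·.trans hle) id)
      (hright.elim (·.trans (by linarith)) id)
  · exact H.exists_hasGap_of_le_chordForm₁ (hleft.elim id (·.trans hle))
      (hright.elim id (·.trans (by linarith)))

/-- In this configuration `[p₁, q₁]` cuts off the corner `(0, 0)` and `[p₂, q₂]` cuts off the corner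
`(1, 1)`. In either case of `hnear`, the triangle cut off by `[p₁, q₁]` has a leg longer than
`1 / 2`, which makes the determinants of that chord large enough. -/
theorem exists_hasGap_of_opposite_corners_of_lt (H : IsOrderedChordPair p₁ q₁ p₂ q₂) (hm : 0 ≤ m)
    (hmp : m ≤ dist p₁ p₂) (hmq : m ≤ dist q₁ q₂)
    (hp₁ : p₁.1 = 0) (hp₂ : p₂.2 = 1) (hq₁ : q₁.2 = 0) (hq₂ : q₂.1 = 1)
    (hnear : p₂.1 + (1 - q₁.1) < m ^ 2 / 2 ∨ q₂.2 + (1 - p₁.2) < m ^ 2 / 2) :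
    ∃ φ : StrongDual ℝ (ℝ × ℝ), ‖φ‖ ≤ 2 ∧ HasGap φ (m ^ 2 / 2) {p₁, q₁} {p₂, q₂} := by
  have hm₁ : m ≤ 1 := hmq.trans (H.dist_right_le_fst.trans_eq hq₂)
  have hmm : m ^ 2 ≤ m := pow_le_of_le_one hm hm₁ two_ne_zero
  rw [dist_eq_max_sub_of_le H.left_le, hp₁, hp₂, sub_zero, le_max_iff] at hmp
  rw [dist_eq_max_sub_of_le H.right_le, hq₁, hq₂, sub_zero, le_max_iff] at hmq
  obtain ⟨⟨-, hy₁, hy₁'⟩, -⟩ := H.left_mem₁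
  obtain ⟨⟨⟨hx₂, -⟩, -⟩, -⟩ := H.left_mem₂
  obtain ⟨⟨⟨hr₁, hr₁'⟩, -⟩, -⟩ := H.right_mem₁
  obtain ⟨⟨-, hs₂, -⟩, -⟩ := H.right_mem₂
  have hleft : chordForm p₁ q₁ (p₂ - p₁) = p₁.2 * p₂.1 + q₁.1 * (1 - p₁.2) := by
    simp only [chordForm_apply, Prod.fst_sub, Prod.snd_sub, hp₁, hp₂, hq₁, sub_zero]
  have hright : chordForm p₁ q₁ (q₂ - q₁) = p₁.2 * (1 - q₁.1) + q₁.1 * q₂.2 := by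
    simp only [chordForm_apply, Prod.fst_sub, Prod.snd_sub, hp₁, hq₁, hq₂, sub_zero]
  have half_le_mul {a b : ℝ} (ha : 1 / 2 ≤ a) (hb : m ≤ b) : m / 2 ≤ a * b := by nlinarith
  apply H.exists_hasGap_of_le_chordForm₁
  · rw [hleft]
    rcases hnear with hnear | hnear
    · have hleg : 1 / 2 ≤ q₁.1 := by linarith
      have hmy : m ≤ 1 - p₁.2 := hmp.resolve_left (by linarith)
      linarith [half_le_mul hleg hmy, mul_nonneg hy₁ hx₂]
    · have hleg : 1 / 2 ≤ p₁.2 := by linarith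
      have hmx : m ≤ p₂.1 := hmp.resolve_right (by linarith)
      linarith [half_le_mul hleg hmx, mul_nonneg hr₁ (sub_nonneg.2 hy₁')]
  · rw [hright]
    rcases hnear with hnear | hnear
    · have hleg : 1 / 2 ≤ q₁.1 := by linarith
      have hms : m ≤ q₂.2 := hmq.resolve_left (by linarith)
      linarith [half_le_mul hleg hms, mul_nonneg hy₁ (sub_nonneg.2 hr₁')]
    · have hleg : 1 / 2 ≤ p₁.2 := by linarith
      have hmr : m ≤ 1 - q₁.1 := hmq.resolve_right (by linarith)
      linarith [half_le_mul hleg hmr, mul_nonneg hr₁ hs₂]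

theorem exists_hasGap_of_opposite_corners (H : IsOrderedChordPair p₁ q₁ p₂ q₂) (hm : 0 ≤ m)
    (hmp : m ≤ dist p₁ p₂) (hmq : m ≤ dist q₁ q₂)
    (hp₁ : p₁.1 = 0) (hp₂ : p₂.2 = 1) (hq₁ : q₁.2 = 0) (hq₂ : q₂.1 = 1) :
    ∃ φ : StrongDual ℝ (ℝ × ℝ), ‖φ‖ ≤ 2 ∧ HasGap φ (m ^ 2 / 2) {p₁, q₁} {p₂, q₂} := by
  by_cases hnear : p₂.1 + (1 - q₁.1) < m ^ 2 / 2 ∨ q₂.2 + (1 - p₁.2) < m ^ 2 / 2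
  · exact H.exists_hasGap_of_opposite_corners_of_lt hm hmp hmq hp₁ hp₂ hq₁ hq₂ hnear
  obtain ⟨hfar₁, hfar₂⟩ := by simpa only [not_or, not_lt] using hnear
  have hm₁ : m ≤ 1 := hmq.trans (H.dist_right_le_fst.trans_eq hq₂)
  have hsq : m ^ 2 / 2 ≤ m :=
    (half_le_self (sq_nonneg m)).trans (pow_le_of_le_one hm hm₁ two_ne_zero)
  rw [dist_eq_max_sub_of_le H.left_le, hp₁, hp₂, sub_zero] at hmp
  rw [dist_eq_max_sub_of_le H.right_le, hq₁, hq₂, sub_zero] at hmq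
  have hp : m ≤ p₂.1 + (1 - p₁.2) :=
    hmp.trans (max_le_add_of_nonneg H.left_mem₂.1.1.1 (sub_nonneg.2 H.left_mem₁.1.2.2))
  have hq : m ≤ (1 - q₁.1) + q₂.2 :=
    hmq.trans (max_le_add_of_nonneg (sub_nonneg.2 H.right_mem₁.1.1.2) H.right_mem₂.1.2.1)
  refine ⟨coordForm 1 1, (norm_coordForm_le 1 1).trans (by norm_num), ?_⟩
  rintro z (rfl | rfl) w (rfl | rfl) <;> simp only [coordForm_apply] <;> linarith

theorem exists_hasGap (H : IsOrderedChordPair p₁ q₁ p₂ q₂) (hm : 0 ≤ m)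
    (hmp : m ≤ dist p₁ p₂) (hmq : m ≤ dist q₁ q₂) :
    ∃ φ : StrongDual ℝ (ℝ × ℝ), ‖φ‖ ≤ 2 ∧ HasGap φ (m ^ 2 / 2) {p₁, q₁} {p₂, q₂} := by
  by_cases hside : p₁.2 = 1 ∨ p₂.1 = 0 ∨ q₁.1 = 1 ∨ q₂.2 = 0
  · obtain ⟨φ, hφ, hgap⟩ := H.exists_hasGap_of_common_side hm hmp hmq hside
    exact ⟨φ, hφ, hgap.mono (half_le_self (sq_nonneg m))⟩
  · obtain ⟨htop, hleft, hright, hbottom⟩ := by simpa only [not_or] using hside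
    exact H.exists_hasGap_of_opposite_corners hm hmp hmq
      (H.left_mem₁.2.resolve_right htop) (H.left_mem₂.2.resolve_left hleft)
      (H.right_mem₁.2.resolve_right hright) (H.right_mem₂.2.resolve_left hbottom)

theorem min_dist_sq_le (H : IsOrderedChordPair p₁ q₁ p₂ q₂) {x₁ x₂ : ℝ × ℝ}
    (hx₁ : x₁ ∈ segment ℝ p₁ q₁) (hx₂ : x₂ ∈ segment ℝ p₂ q₂) :
    min (dist p₁ p₂) (dist q₁ q₂) ^ 2 ≤ 4 * dist x₁ x₂ := by
  obtain ⟨φ, hφ, hgap⟩ :=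
    H.exists_hasGap (le_min dist_nonneg dist_nonneg) (min_le_left _ _) (min_le_right _ _)
  rw [← convexHull_pair] at hx₁ hx₂
  have hle := hgap.convexHull.le_norm_mul_dist hx₁ hx₂
  have hφd : ‖φ‖ * dist x₁ x₂ ≤ 2 * dist x₁ x₂ := by gcongr
  linarith

end IsOrderedChordPair

end UnitSquare

section Orientation

theorem strictMonoOn_or_strictAntiOn_of_isChain {ι α δ : Type*} [ConditionallyCompleteLinearOrder ι]
    [TopologicalSpace ι] [OrderTopology ι] [DenselyOrdered ι] [LinearOrder δ] [TopologicalSpace δ]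
    [OrderClosedTopology δ] [PartialOrder α] [TopologicalSpace α] {σ : α → δ} {g : ι → α} {a b : ι}
    (hσ : Continuous σ) (hσm : StrictMono σ) (hab : a ≤ b) (hg : ContinuousOn g (Icc a b))
    (hinj : InjOn g (Icc a b)) (hchain : IsChain (· ≤ ·) (g '' Icc a b)) :
    StrictMonoOn g (Icc a b) ∨ StrictAntiOn g (Icc a b) := by
  have lt_of_σ_lt : ∀ s ∈ Icc a b, ∀ t ∈ Icc a b, σ (g s) < σ (g t) → g s < g t := by
    intro s hs t ht hlt
    rcases hchain.total (mem_image_of_mem g hs) (mem_image_of_mem g ht) with hle | hle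
    · exact hle.lt_of_ne fun heq => hlt.ne (congrArg σ heq)
    · exact absurd (hσm.monotone hle) hlt.not_ge
  have hσg : InjOn (σ ∘ g) (Icc a b) := by
    intro s hs t ht heq
    rcases hchain.total (mem_image_of_mem g hs) (mem_image_of_mem g ht) with hle | hle
    · exact hinj hs ht (hle.eq_of_not_lt fun hlt => (hσm hlt).ne heq)
    · exact hinj hs ht (hle.eq_of_not_lt fun hlt => (hσm hlt).ne' heq).symm
  refine ((hσ.comp_continuousOn hg).strictMonoOn_of_injOn_Icc' hab hσg).imp ?_ ?_
  · exact fun hm s hs t ht hst => lt_of_σ_lt s hs t ht (hm hs ht hst)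
  · exact fun hm s hs t ht hst => lt_of_σ_lt t ht s hs (hm hs ht hst)

theorem strictMonoOn_and_or_strictAntiOn_and {α : Type*} [Preorder α] {g₁ g₂ : ℝ → α} {T₁ T₂ : ℝ}
    (hT₁ : 0 < T₁) (hT₂ : 0 < T₂) (hstart : g₁ 0 = g₂ 0) (hend : g₁ T₁ = g₂ T₂)
    (h₁ : StrictMonoOn g₁ (Icc 0 T₁) ∨ StrictAntiOn g₁ (Icc 0 T₁))
    (h₂ : StrictMonoOn g₂ (Icc 0 T₂) ∨ StrictAntiOn g₂ (Icc 0 T₂)) :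
    (StrictMonoOn g₁ (Icc 0 T₁) ∧ StrictMonoOn g₂ (Icc 0 T₂)) ∨
      (StrictAntiOn g₁ (Icc 0 T₁) ∧ StrictAntiOn g₂ (Icc 0 T₂)) := by
  have l₁ := left_mem_Icc.2 hT₁.le
  have r₁ := right_mem_Icc.2 hT₁.le
  have l₂ := left_mem_Icc.2 hT₂.le
  have r₂ := right_mem_Icc.2 hT₂.le
  rcases h₁ with h₁ | h₁ <;> rcases h₂ with h₂ | h₂
  · exact Or.inl ⟨h₁, h₂⟩
  · exact absurd (h₂ l₂ r₂ hT₂) (hstart ▸ hend ▸ h₁ l₁ r₁ hT₁).not_gt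
  · exact absurd (h₂ l₂ r₂ hT₂) (hstart ▸ hend ▸ h₁ l₁ r₁ hT₁).not_gt
  · exact Or.inr ⟨h₁, h₂⟩

/-- `γ`, restricted to `[0, T]`, is a continuous parametrization of the arc `Γ` along which `f` is
strictly increasing. -/
structure IsIncreasingParam {X : Type*} [TopologicalSpace X] (f : X → ℝ) (γ : ℝ → X) (T : ℝ)
    (Γ : Set X) : Prop where
  pos : 0 < T
  continuousOn : ContinuousOn γ (Icc 0 T)
  image_eq : γ '' Icc 0 T = Γ
  strictMonoOn : StrictMonoOn (f ∘ γ) (Icc 0 T)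

namespace IsIncreasingParam

variable {X : Type*} [TopologicalSpace X] {f : X → ℝ} {γ : ℝ → X} {T : ℝ} {Γ : Set X} {p q : X}

theorem strictMonoOn_comp_or_strictAntiOn_comp {N : X → ℝ × ℝ} (hγ : IsIncreasingParam f γ T Γ)
    (hN : Continuous N) (hinj : InjOn N Γ) (hchain : IsChain (· ≤ ·) (N '' Γ)) :
    StrictMonoOn (N ∘ γ) (Icc 0 T) ∨ StrictAntiOn (N ∘ γ) (Icc 0 T) := by
  have hσ : StrictMono fun z : ℝ × ℝ => z.1 + z.2 := fun z w hzw => by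
    rcases Prod.lt_iff.1 hzw with ⟨h₁, h₂⟩ | ⟨h₁, h₂⟩
    · exact add_lt_add_of_lt_of_le h₁ h₂
    · exact add_lt_add_of_le_of_lt h₁ h₂
  refine strictMonoOn_or_strictAntiOn_of_isChain (continuous_fst.add continuous_snd) hσ hγ.pos.le
    (hN.comp_continuousOn hγ.continuousOn) ?_ ?_
  · exact hinj.comp hγ.strictMonoOn.injOn.of_comp (mapsTo_iff_image_subset.2 hγ.image_eq.subset)
  · rwa [image_comp, hγ.image_eq]

variable {α : Type*} [Preorder α] {N : X → α}

theorem apply_le_of_strictMonoOn (hγ : IsIncreasingParam f γ T Γ)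
    (hN : StrictMonoOn (N ∘ γ) (Icc 0 T)) (hp : p ∈ Γ) (hq : q ∈ Γ) (hpq : f p ≤ f q) :
    N p ≤ N q := by
  obtain ⟨s, hs, rfl⟩ := hγ.image_eq.symm ▸ hp
  obtain ⟨t, ht, rfl⟩ := hγ.image_eq.symm ▸ hq
  exact hN.monotoneOn hs ht ((hγ.strictMonoOn.le_iff_le hs ht).1 hpq)

theorem apply_le_of_strictAntiOn (hγ : IsIncreasingParam f γ T Γ)
    (hN : StrictAntiOn (N ∘ γ) (Icc 0 T)) (hp : p ∈ Γ) (hq : q ∈ Γ) (hpq : f p ≤ f q) :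
    N q ≤ N p :=
  hγ.apply_le_of_strictMonoOn (α := αᵒᵈ) hN hp hq hpq

end IsIncreasingParam

end Orientation

section Rectangle

/-- The left and top sides of `[-L, L] × [-h, h]`, that is, the arc `Γ₁`. -/
def rectUpperLeft (L h : ℝ) : Set E2 :=
  {p | (p 1 = h ∧ |p 0| ≤ L) ∨ (p 0 = -L ∧ |p 1| ≤ h)}

/-- The bottom and right sides of `[-L, L] × [-h, h]`, that is, the arc `Γ₂`. -/
def rectLowerRight (L h : ℝ) : Set E2 :=
  {p | (p 1 = -h ∧ |p 0| ≤ L) ∨ (p 0 = L ∧ |p 1| ≤ h)}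

/-- The affine change of coordinates taking `[-L, L] × [-h, h]` to the unit square. -/
def unitCoords (L h : ℝ) (p : E2) : ℝ × ℝ :=
  ((p 0 + L) / (2 * L), (p 1 + h) / (2 * h))

theorem continuous_unitCoords (L h : ℝ) : Continuous (unitCoords L h) := by
  unfold unitCoords; fun_prop

variable {L h : ℝ} {p q z : E2}

theorem div_mem_Icc_of_abs_le {a l : ℝ} (hl : 0 < l) (ha : |a| ≤ l) :
    (a + l) / (2 * l) ∈ Icc (0 : ℝ) 1 := by
  obtain ⟨h₁, h₂⟩ := abs_le.1 ha
  exact ⟨div_nonneg (by linarith) (by linarith), (div_le_one (by linarith)).2 (by linarith)⟩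

theorem unitCoords_mem_upperLeft (hL : 0 < L) (hh : 0 < h) (hp : p ∈ rectUpperLeft L h) :
    unitCoords L h p ∈ upperLeft := by
  rcases hp with ⟨htop, hp⟩ | ⟨hleft, hp⟩
  · refine ⟨⟨div_mem_Icc_of_abs_le hL hp, div_mem_Icc_of_abs_le hh ?_⟩, Or.inr ?_⟩
    · rw [htop, abs_of_pos hh]
    · simp only [unitCoords, htop]; field_simp; norm_num
  · refine ⟨⟨div_mem_Icc_of_abs_le hL ?_, div_mem_Icc_of_abs_le hh hp⟩, Or.inl ?_⟩
    · rw [hleft, abs_neg, abs_of_pos hL]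
    · simp only [unitCoords, hleft, neg_add_cancel, zero_div]

theorem unitCoords_mem_lowerRight (hL : 0 < L) (hh : 0 < h) (hp : p ∈ rectLowerRight L h) :
    unitCoords L h p ∈ lowerRight := by
  rcases hp with ⟨hbottom, hp⟩ | ⟨hright, hp⟩
  · refine ⟨⟨div_mem_Icc_of_abs_le hL hp, div_mem_Icc_of_abs_le hh ?_⟩, Or.inl ?_⟩
    · rw [hbottom, abs_neg, abs_of_pos hh]
    · simp only [unitCoords, hbottom, neg_add_cancel, zero_div]
  · refine ⟨⟨div_mem_Icc_of_abs_le hL ?_, div_mem_Icc_of_abs_le hh hp⟩, Or.inr ?_⟩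
    · rw [hright, abs_of_pos hL]
    · simp only [unitCoords, hright]; field_simp; norm_num

theorem unitCoords_mem_segment (hz : z ∈ segment ℝ p q) :
    unitCoords L h z ∈ segment ℝ (unitCoords L h p) (unitCoords L h q) := by
  obtain ⟨a, b, ha, hb, hab, rfl⟩ := hz
  refine ⟨a, b, ha, hb, hab, ?_⟩
  obtain rfl : b = 1 - a := by linarith
  ext <;>
    simp only [unitCoords, Prod.fst_add, Prod.snd_add, Prod.smul_fst, Prod.smul_snd,
      PiLp.add_apply, PiLp.smul_apply, smul_eq_mul] <;>
    ring

theorem dist_unitCoords (hL : 0 < L) (hh : 0 < h) (p q : E2) :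
    dist (unitCoords L h p) (unitCoords L h q) =
      max (|p 0 - q 0| / (2 * L)) (|p 1 - q 1| / (2 * h)) := by
  simp only [Prod.dist_eq, unitCoords, Real.dist_eq, ← sub_div, add_sub_add_right_eq_sub, abs_div,
    abs_of_pos (mul_pos two_pos hL), abs_of_pos (mul_pos two_pos hh)]

theorem dist_unitCoords_le (hL : 0 < L) (hh : 0 < h) (p q : E2) :
    dist (unitCoords L h p) (unitCoords L h q) ≤ dist p q / (2 * min L h) := by
  have hcoord : ∀ i, |p i - q i| ≤ dist p q := fun i => by
    simpa [dist_eq_norm] using PiLp.norm_apply_le (p - q) i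
  have hmin : 0 < 2 * min L h := mul_pos two_pos (lt_min hL hh)
  rw [dist_unitCoords hL hh]
  refine max_le ?_ ?_
  · exact div_le_div₀ dist_nonneg (hcoord 0) hmin (by gcongr; exact min_le_left _ _)
  · exact div_le_div₀ dist_nonneg (hcoord 1) hmin (by gcongr; exact min_le_right _ _)

theorem dist_le_mul_dist_unitCoords (hL : 0 < L) (hh : 0 < h) (p q : E2) :
    dist p q ≤ 2 * (L + h) * dist (unitCoords L h p) (unitCoords L h q) := by
  set d := dist (unitCoords L h p) (unitCoords L h q) with hd
  have hd₀ : 0 ≤ d := dist_nonneg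
  rw [dist_unitCoords hL hh] at hd
  have h₀ : |p 0 - q 0| ≤ d * (2 * L) := (div_le_iff₀ (by positivity)).1 (hd ▸ le_max_left _ _)
  have h₁ : |p 1 - q 1| ≤ d * (2 * h) := (div_le_iff₀ (by positivity)).1 (hd ▸ le_max_right _ _)
  rw [EuclideanSpace.dist_eq, Fin.sum_univ_two, Real.dist_eq, Real.dist_eq]
  refine Real.sqrt_le_iff.2 ⟨by positivity, ?_⟩
  calc |p 0 - q 0| ^ 2 + |p 1 - q 1| ^ 2 ≤ (|p 0 - q 0| + |p 1 - q 1|) ^ 2 := by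
        nlinarith [mul_nonneg (abs_nonneg (p 0 - q 0)) (abs_nonneg (p 1 - q 1))]
    _ ≤ (d * (2 * L) + d * (2 * h)) ^ 2 := by gcongr
    _ = (2 * (L + h) * d) ^ 2 := by ring

theorem unitCoords_injective (hL : 0 < L) (hh : 0 < h) : Function.Injective (unitCoords L h) :=
  fun p q hpq => dist_le_zero.1 <| by
    simpa only [hpq, dist_self, mul_zero] using dist_le_mul_dist_unitCoords hL hh p q

variable {p₁ p₂ q₁ q₂ x₁ x₂ : E2}

theorem IsOrderedChordPair.min_dist_le_mul_sqrt (hL : 0 < L) (hh : 0 < h)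
    (H : IsOrderedChordPair (unitCoords L h p₁) (unitCoords L h q₁) (unitCoords L h p₂)
      (unitCoords L h q₂))
    (hx₁ : x₁ ∈ segment ℝ p₁ q₁) (hx₂ : x₂ ∈ segment ℝ p₂ q₂) :
    min (dist p₁ p₂) (dist q₁ q₂) ≤ 2 * (L + h) * √(2 / min L h) * √(dist x₁ x₂) := by
  have hsq := H.min_dist_sq_le (unitCoords_mem_segment hx₁) (unitCoords_mem_segment hx₂)
  set m := min (dist (unitCoords L h p₁) (unitCoords L h p₂))
    (dist (unitCoords L h q₁) (unitCoords L h q₂))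
  have hm : m ≤ √(2 / min L h) * √(dist x₁ x₂) := by
    rw [← Real.sqrt_mul (by positivity)]
    refine Real.le_sqrt_of_sq_le (hsq.trans ?_)
    calc 4 * dist (unitCoords L h x₁) (unitCoords L h x₂)
        ≤ 4 * (dist x₁ x₂ / (2 * min L h)) := by gcongr; exact dist_unitCoords_le hL hh _ _
      _ = 2 / min L h * dist x₁ x₂ := by field_simp; ring
  calc min (dist p₁ p₂) (dist q₁ q₂) ≤ 2 * (L + h) * m := by
        rw [mul_min_of_nonneg _ _ (by positivity)]
        exact min_le_min (dist_le_mul_dist_unitCoords hL hh _ _)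
          (dist_le_mul_dist_unitCoords hL hh _ _)
    _ ≤ 2 * (L + h) * (√(2 / min L h) * √(dist x₁ x₂)) := by gcongr
    _ = _ := by ring

variable {f : E2 → ℝ} {γ₁ γ₂ : ℝ → E2} {T₁ T₂ : ℝ}

theorem isOrderedChordPair_or_of_isIncreasingParam (hL : 0 < L) (hh : 0 < h)
    (hγ₁ : IsIncreasingParam f γ₁ T₁ (rectUpperLeft L h))
    (hγ₂ : IsIncreasingParam f γ₂ T₂ (rectLowerRight L h))
    (hstart : γ₁ 0 = γ₂ 0) (hend : γ₁ T₁ = γ₂ T₂)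
    (hp₁ : p₁ ∈ rectUpperLeft L h) (hq₁ : q₁ ∈ rectLowerRight L h)
    (hp₂ : p₂ ∈ rectUpperLeft L h) (hq₂ : q₂ ∈ rectLowerRight L h)
    (hp : f p₁ ≤ f p₂) (hq : f q₁ ≤ f q₂) :
    IsOrderedChordPair (unitCoords L h p₁) (unitCoords L h q₁) (unitCoords L h p₂)
        (unitCoords L h q₂) ∨
      IsOrderedChordPair (unitCoords L h p₂) (unitCoords L h q₂) (unitCoords L h p₁)
        (unitCoords L h q₁) := by
  have hup : MapsTo (unitCoords L h) (rectUpperLeft L h) upperLeft :=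
    fun _ => unitCoords_mem_upperLeft hL hh
  have hlow : MapsTo (unitCoords L h) (rectLowerRight L h) lowerRight :=
    fun _ => unitCoords_mem_lowerRight hL hh
  have hor₁ := hγ₁.strictMonoOn_comp_or_strictAntiOn_comp (continuous_unitCoords L h)
    (unitCoords_injective hL hh).injOn (isChain_upperLeft.mono hup.image_subset)
  have hor₂ := hγ₂.strictMonoOn_comp_or_strictAntiOn_comp (continuous_unitCoords L h)
    (unitCoords_injective hL hh).injOn (isChain_lowerRight.mono hlow.image_subset)
  refine (strictMonoOn_and_or_strictAntiOn_and hγ₁.pos hγ₂.pos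
    (congrArg (unitCoords L h) hstart) (congrArg (unitCoords L h) hend) hor₁ hor₂).imp ?_ ?_
  · rintro ⟨hm₁, hm₂⟩
    exact ⟨hup hp₁, hlow hq₁, hup hp₂, hlow hq₂, hγ₁.apply_le_of_strictMonoOn hm₁ hp₁ hp₂ hp,
      hγ₂.apply_le_of_strictMonoOn hm₂ hq₁ hq₂ hq⟩
  · rintro ⟨hm₁, hm₂⟩
    exact ⟨hup hp₂, hlow hq₂, hup hp₁, hlow hq₁, hγ₁.apply_le_of_strictAntiOn hm₁ hp₁ hp₂ hp,
      hγ₂.apply_le_of_strictAntiOn hm₂ hq₁ hq₂ hq⟩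

theorem min_dist_le_of_mem_level_segments (hL : 0 < L) (hh : 0 < h)
    (hγ₁ : IsIncreasingParam f γ₁ T₁ (rectUpperLeft L h))
    (hγ₂ : IsIncreasingParam f γ₂ T₂ (rectLowerRight L h))
    (hstart : γ₁ 0 = γ₂ 0) (hend : γ₁ T₁ = γ₂ T₂)
    (hp₁ : p₁ ∈ rectUpperLeft L h) (hq₁ : q₁ ∈ rectLowerRight L h)
    (hp₂ : p₂ ∈ rectUpperLeft L h) (hq₂ : q₂ ∈ rectLowerRight L h)
    (hf₁ : f p₁ = f q₁) (hf₂ : f p₂ = f q₂)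
    (hx₁ : x₁ ∈ segment ℝ p₁ q₁) (hx₂ : x₂ ∈ segment ℝ p₂ q₂) :
    min (dist p₁ p₂) (dist q₁ q₂) ≤ 2 * (L + h) * √(2 / min L h) * √(dist x₁ x₂) := by
  wlog hle : f p₁ ≤ f p₂ generalizing p₁ p₂ q₁ q₂ x₁ x₂
  · rw [dist_comm p₁, dist_comm q₁, dist_comm x₁]
    exact this hp₂ hq₂ hp₁ hq₁ hf₂ hf₁ hx₂ hx₁ (le_of_not_ge hle)
  rcases isOrderedChordPair_or_of_isIncreasingParam hL hh hγ₁ hγ₂ hstart hend hp₁ hq₁ hp₂ hq₂ hle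
    (hf₁ ▸ hf₂ ▸ hle) with H | H
  · exact H.min_dist_le_mul_sqrt hL hh hx₁ hx₂
  · rw [dist_comm p₁, dist_comm q₁, dist_comm x₁]
    exact H.min_dist_le_mul_sqrt hL hh hx₂ hx₁

end Rectangle

theorem uniformContinuousOn_of_dist_le {X Y : Type*} [PseudoMetricSpace X] [PseudoMetricSpace Y]
    {w : X → Y} {s : Set X} {η : ℝ → ℝ} (hη : Tendsto η (𝓝[≥] 0) (𝓝 0))
    (hw : ∀ x ∈ s, ∀ y ∈ s, dist (w x) (w y) ≤ η (dist x y)) : UniformContinuousOn w s := by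
  refine Metric.uniformContinuousOn_iff.2 fun ε hε => ?_
  obtain ⟨δ, hδ, hηδ⟩ := Metric.mem_nhdsWithin_iff.1 (hη.eventually_lt_const hε)
  refine ⟨δ, hδ, fun x hx y hy hxy => (hw x hx y hy).trans_lt (hηδ ⟨?_, dist_nonneg⟩)⟩
  rwa [mem_ball, Real.dist_0_eq_abs, abs_of_nonneg dist_nonneg]

theorem foliation_function_continuous_general {L h : ℝ} (hL : 0 < L) (hh : 0 < h) :
    ∃ c : ℝ, 0 < c ∧
      ∀ {f : E2 → ℝ} {ω : ℝ → ℝ} {T₁ T₂ : ℝ} {γ₁ γ₂ : ℝ → E2} {w : E2 → ℝ} {S : Set E2},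
        ω 0 = 0 → Monotone ω → ContinuousAt ω 0 →
        (∀ p ∈ rectUpperLeft L h ∪ rectLowerRight L h,
          ∀ q ∈ rectUpperLeft L h ∪ rectLowerRight L h, |f p - f q| ≤ ω (dist p q)) →
        IsIncreasingParam f γ₁ T₁ (rectUpperLeft L h) →
        IsIncreasingParam f γ₂ T₂ (rectLowerRight L h) →
        γ₁ 0 = γ₂ 0 → γ₁ T₁ = γ₂ T₂ →
        (∀ z ∈ S, ∃ p ∈ rectUpperLeft L h, ∃ q ∈ rectLowerRight L h,
          f p = w z ∧ f q = w z ∧ z ∈ segment ℝ p q) →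
        (∀ x₁ ∈ S, ∀ x₂ ∈ S, |w x₁ - w x₂| ≤ ω (c * √(dist x₁ x₂))) ∧
          UniformContinuousOn w S := by
  set c := 2 * (L + h) * √(2 / min L h)
  refine ⟨c, by positivity, fun {f ω T₁ T₂ γ₁ γ₂ w S} hω₀ hω hωc hfω hγ₁ hγ₂ hstart hend hw => ?_⟩
  have hle : ∀ x₁ ∈ S, ∀ x₂ ∈ S, |w x₁ - w x₂| ≤ ω (c * √(dist x₁ x₂)) := by
    intro x₁ hx₁ x₂ hx₂
    obtain ⟨p₁, hp₁, q₁, hq₁, hfp₁, hfq₁, hxs₁⟩ := hw x₁ hx₁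
    obtain ⟨p₂, hp₂, q₂, hq₂, hfp₂, hfq₂, hxs₂⟩ := hw x₂ hx₂
    refine le_trans ?_ (hω (min_dist_le_of_mem_level_segments hL hh hγ₁ hγ₂ hstart hend hp₁ hq₁
      hp₂ hq₂ (hfp₁.trans hfq₁.symm) (hfp₂.trans hfq₂.symm) hxs₁ hxs₂))
    rcases min_choice (dist p₁ p₂) (dist q₁ q₂) with hnearer | hnearer <;> rw [hnearer]
    · exact hfp₁ ▸ hfp₂ ▸ hfω p₁ (Or.inl hp₁) p₂ (Or.inl hp₂)
    · exact hfq₁ ▸ hfq₂ ▸ hfω q₁ (Or.inr hq₁) q₂ (Or.inr hq₂)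
  have hη : Tendsto (fun d => ω (c * √d)) (𝓝[≥] 0) (𝓝 0) := by
    have hsqrt : Tendsto (fun d : ℝ => c * √d) (𝓝 0) (𝓝 0) :=
      Continuous.tendsto' (by fun_prop) _ _ (by rw [Real.sqrt_zero, mul_zero])
    have hω_zero : Tendsto ω (𝓝 0) (𝓝 0) := by simpa only [hω₀] using hωc.tendsto
    exact (hω_zero.comp hsqrt).mono_left nhdsWithin_le_nhds
  exact ⟨hle, uniformContinuousOn_of_dist_le hη hle⟩

/-- on the rectangle `Ω = (-L,L) × (-h,h)` foliated by the level segments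
`ℓᵗ` of the boundary datum `f` (continuous with modulus of continuity `ω`, strictly
monotone along `Γ₁` and `Γ₂`), the function `w` defined by `w(z) = t` for `z ∈ ℓᵗ`
satisfies `|w x₁ - w x₂| ≤ ω (c₁ |x₁ - x₂| + c₂ √|x₁ - x₂|)` with constants `c₁, c₂ > 0`
depending only on `Ω`; in particular `w` is continuous on `Ω`. -/
theorem foliation_function_continuous
    (L h : ℝ) (hL : 0 < L) (hh : 0 < h)
    (Ω : Set E2) (hΩ : Ω = {p : E2 | |p 0| < L ∧ |p 1| < h})
    (Γ₁ Γ₂ : Set E2)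
    (hΓ₁ : Γ₁ = {p : E2 | (p 1 = h ∧ |p 0| ≤ L) ∨ (p 0 = -L ∧ |p 1| ≤ h)})
    (hΓ₂ : Γ₂ = {p : E2 | (p 1 = -h ∧ |p 0| ≤ L) ∨ (p 0 = L ∧ |p 1| ≤ h)}) :
    ∃ c₁ c₂ : ℝ, 0 < c₁ ∧ 0 < c₂ ∧
      ∀ (f : E2 → ℝ) (ω : ℝ → ℝ) (T₁ T₂ : ℝ) (γ₁ γ₂ : ℝ → E2) (w : E2 → ℝ),
        ContinuousOn f (Γ₁ ∪ Γ₂) →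
        ω 0 = 0 → Monotone ω → ContinuousAt ω 0 →
        (∀ p ∈ Γ₁ ∪ Γ₂, ∀ q ∈ Γ₁ ∪ Γ₂, |f p - f q| ≤ ω (dist p q)) →
        0 < T₁ → 0 < T₂ →
        ContinuousOn γ₁ (Icc 0 T₁) → ContinuousOn γ₂ (Icc 0 T₂) →
        InjOn γ₁ (Icc 0 T₁) → InjOn γ₂ (Icc 0 T₂) →
        γ₁ '' Icc 0 T₁ = Γ₁ → γ₂ '' Icc 0 T₂ = Γ₂ →
        γ₁ 0 = γ₂ 0 → γ₁ T₁ = γ₂ T₂ →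
        StrictMonoOn (f ∘ γ₁) (Icc 0 T₁) → StrictMonoOn (f ∘ γ₂) (Icc 0 T₂) →
        (∀ z ∈ Ω, ∃ p ∈ Γ₁, ∃ q ∈ Γ₂, f p = w z ∧ f q = w z ∧ z ∈ segment ℝ p q) →
        (∀ x₁ ∈ Ω, ∀ x₂ ∈ Ω,
          |w x₁ - w x₂| ≤ ω (c₁ * dist x₁ x₂ + c₂ * Real.sqrt (dist x₁ x₂))) ∧
        ContinuousOn w Ω := by
  subst hΓ₁ hΓ₂
  obtain ⟨c, hc, H⟩ := foliation_function_continuous_general hL hh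
  refine ⟨1, c, one_pos, hc, fun f ω T₁ T₂ γ₁ γ₂ w _ hω₀ hω hωc hfω hT₁ hT₂ hγ₁ hγ₂ _ _ hΓ₁ hΓ₂
    hstart hend hf₁ hf₂ hw => ?_⟩
  obtain ⟨hle, hcont⟩ :=
    H hω₀ hω hωc hfω ⟨hT₁, hγ₁, hΓ₁, hf₁⟩ ⟨hT₂, hγ₂, hΓ₂, hf₂⟩ hstart hend hw
  exact ⟨fun x₁ hx₁ x₂ hx₂ =>
    (hle x₁ hx₁ x₂ hx₂).trans (hω (le_add_of_nonneg_left (by positivity))), hcont.continuousOn⟩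

end
end
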